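/- arXiv:2202.08000 — 8 statements merged into one kernel-verified Lean document; each statement's English description precedes it below -/
import Mathlib

section
/- The Cantor ternary set satisfies C + C = [0,2], i.e., the set of all sums x + y with x, y in the Cantor set equals the closed interval [0,2]. -/
open Pointwise

lemma exists_preCantorSet_add (n : ℕ) : ∀ t : ℝ, 0 ≤ t → t ≤ 2 →
    ∃ x, x ∈ preCantorSet n ∧ t - x ∈ preCantorSet n := by
  induction n with
  | zero =>
    intro t h0 h2
    refine ⟨t / 2, ?_, ?_⟩ <;> simp only [preCantorSet_zero, Set.mem_Icc] <;>
      constructor <;> linarith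
  | succ n ih =>
    intro t h0 h2
    simp only [preCantorSet_succ]
    rcases le_total (3 * t) 2 with h | h
    · obtain ⟨x, hx, hy⟩ := ih (3 * t) (by linarith) h
      exact ⟨x / 3, Or.inl ⟨x, hx, rfl⟩, Or.inl ⟨_, hy, by ring⟩⟩
    rcases le_total (3 * t) 4 with h' | h'
    · obtain ⟨x, hx, hy⟩ := ih (3 * t - 2) (by linarith) (by linarith)
      exact ⟨x / 3, Or.inl ⟨x, hx, rfl⟩, Or.inr ⟨_, hy, by ring⟩⟩
    · obtain ⟨x, hx, hy⟩ := ih (3 * t - 4) (by linarith) (by linarith)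
      exact ⟨(2 + x) / 3, Or.inr ⟨x, hx, rfl⟩, Or.inr ⟨_, hy, by ring⟩⟩

/-- The Cantor ternary set satisfies `C + C = [0, 2]`. -/
theorem cantorSet_add_cantorSet : cantorSet + cantorSet = Set.Icc (0 : ℝ) 2 := by
  apply Set.Subset.antisymm
  · rintro _ ⟨x, hx, y, hy, rfl⟩
    have h1 := cantorSet_subset_unitInterval hx
    have h2 := cantorSet_subset_unitInterval hy
    exact ⟨add_nonneg h1.1 h2.1, by show x + y ≤ 2; linarith [h1.2, h2.2]⟩
  · rintro t ⟨h0, h2⟩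
    have hcl : ∀ n, IsClosed {x : ℝ | x ∈ preCantorSet n ∧ t - x ∈ preCantorSet n} := fun n =>
      (isClosed_preCantorSet n).inter
        ((isClosed_preCantorSet n).preimage (continuous_const.sub continuous_id))
    obtain ⟨x, hx⟩ := IsCompact.nonempty_iInter_of_sequence_nonempty_isCompact_isClosed
      (fun n => {x : ℝ | x ∈ preCantorSet n ∧ t - x ∈ preCantorSet n})
      (fun n x hx => ⟨preCantorSet_antitone n.le_succ hx.1, preCantorSet_antitone n.le_succ hx.2⟩)
      (fun n => exists_preCantorSet_add n t h0 h2)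
      (isCompact_Icc.of_isClosed_subset (hcl 0) fun x hx => preCantorSet_subset_unitInterval hx.1)
      hcl
    rw [Set.mem_iInter] at hx
    exact ⟨x, Set.mem_iInter.2 fun n => (hx n).1, t - x, Set.mem_iInter.2 fun n => (hx n).2,
      add_sub_cancel x t⟩
end

section
/- Every real number u with 0 ≤ u ≤ 2 can be written as u = x + y with x and y elements of the Cantor ternary set. -/
lemma preCantor_sum (n : ℕ) : ∀ u : ℝ, 0 ≤ u → u ≤ 2 →
    ∃ x, x ∈ preCantorSet n ∧ u - x ∈ preCantorSet n := by
  induction n with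
  | zero =>
    intro u h0 h2
    refine ⟨u / 2, ?_, ?_⟩ <;> simp only [preCantorSet_zero, Set.mem_Icc] <;>
      constructor <;> linarith
  | succ n ih =>
    intro u h0 h2
    by_cases h : u ≤ 2 / 3
    · obtain ⟨x, hx, hy⟩ := ih (3 * u) (by linarith) (by linarith)
      exact ⟨x / 3, Or.inl ⟨x, hx, rfl⟩, Or.inl ⟨_, hy, by ring⟩⟩
    by_cases h' : u ≤ 4 / 3
    · obtain ⟨x, hx, hy⟩ := ih (3 * u - 2) (by linarith) (by linarith)
      exact ⟨x / 3, Or.inl ⟨x, hx, rfl⟩, Or.inr ⟨_, hy, by ring⟩⟩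
    · obtain ⟨x, hx, hy⟩ := ih (3 * u - 4) (by linarith) (by linarith)
      exact ⟨(2 + x) / 3, Or.inr ⟨x, hx, rfl⟩, Or.inr ⟨_, hy, by ring⟩⟩

/-- Every real `u ∈ [0, 2]` is a sum of two elements of the Cantor ternary set. -/
theorem exists_cantorSet_add_eq (u : ℝ) (hu0 : 0 ≤ u) (hu2 : u ≤ 2) :
    ∃ x y : ℝ, x ∈ cantorSet ∧ y ∈ cantorSet ∧ u = x + y := by
  have hcl : ∀ n, IsClosed {x : ℝ | x ∈ preCantorSet n ∧ u - x ∈ preCantorSet n} := fun n =>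
    (isClosed_preCantorSet n).inter
      ((isClosed_preCantorSet n).preimage (continuous_const.sub continuous_id))
  obtain ⟨x, hx⟩ := IsCompact.nonempty_iInter_of_sequence_nonempty_isCompact_isClosed
    (fun n => {x : ℝ | x ∈ preCantorSet n ∧ u - x ∈ preCantorSet n})
    (fun n x hx => ⟨preCantorSet_antitone (Nat.le_succ n) hx.1,
      preCantorSet_antitone (Nat.le_succ n) hx.2⟩)
    (fun n => preCantor_sum n u hu0 hu2)
    (isCompact_Icc.of_isClosed_subset (hcl 0) fun x hx => hx.1) hcl
  rw [Set.mem_iInter] at hx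
  exact ⟨x, u - x, Set.mem_iInter.mpr fun n => (hx n).1,
    Set.mem_iInter.mpr fun n => (hx n).2, by ring⟩
end

section
/- Let (a_i, b_i), i ∈ ℕ, be a countable family of pairwise disjoint open intervals contained in [0, M], and let g : [0, M] → ℝ satisfy g(x) = (4 / (b_i − a_i)^{1/2}) · min(x − a_i, b_i − x) for x ∈ (a_i, b_i) and g(x) = 0 for x outside the union of the intervals. Then g is 1/2-Hölder continuous on [0, M] with constant 4: |g(x) − g(y)| ≤ 4 · |x − y|^{1/2} for all x, y ∈ [0, M]. -/
lemma tent_key (L m d : ℝ) (hL : 0 < L) (hmL : m ≤ L) (hmd : m ≤ d) (hd : 0 ≤ d) :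
    (4 / L ^ ((1 : ℝ) / 2)) * m ≤ 4 * d ^ ((1 : ℝ) / 2) := by
  rw [← Real.sqrt_eq_rpow, ← Real.sqrt_eq_rpow]
  have hs : 0 < √L := Real.sqrt_pos.2 hL
  rw [div_mul_eq_mul_div, div_le_iff₀ hs]
  have h : m ≤ √d * √L := by
    rcases le_total m 0 with h0 | h0
    · exact h0.trans (by positivity)
    · calc m = √m * √m := (Real.mul_self_sqrt h0).symm
        _ ≤ √d * √L := by gcongr
  linarith

/-- If `g : [0, M] → ℝ` vanishes off a countable pairwise disjoint family of open
intervals `(a i, b i) ⊆ [0, M]` and on each `(a i, b i)` equals the tent function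
`(4 / (b i - a i)^{1/2}) * min (x - a i) (b i - x)`, then `g` is `1/2`-Hölder
continuous on `[0, M]` with constant `4`. -/
theorem tent_family_holder (M : ℝ) (hM : 0 < M) (a b : ℕ → ℝ)
    (hab : ∀ i, a i < b i)
    (hsub : ∀ i, Set.Ioo (a i) (b i) ⊆ Set.Icc 0 M)
    (hdisj : Pairwise (Function.onFun Disjoint (fun i => Set.Ioo (a i) (b i))))
    (g : ℝ → ℝ)
    (hg_tent : ∀ i, ∀ x ∈ Set.Ioo (a i) (b i),
      g x = (4 / (b i - a i) ^ ((1 : ℝ) / 2)) * min (x - a i) (b i - x))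
    (hg_zero : ∀ x ∈ Set.Icc 0 M, x ∉ ⋃ i, Set.Ioo (a i) (b i) → g x = 0) :
    ∀ x ∈ Set.Icc 0 M, ∀ y ∈ Set.Icc 0 M,
      |g x - g y| ≤ 4 * |x - y| ^ ((1 : ℝ) / 2) := by
  have key : ∀ x ∈ Set.Icc 0 M, ∀ y ∈ Set.Icc 0 M,
      g x - g y ≤ 4 * |x - y| ^ ((1 : ℝ) / 2) := by
    intro x hx y hy
    have nn : 0 ≤ g y := by
      by_cases h : y ∈ ⋃ i, Set.Ioo (a i) (b i)
      · obtain ⟨i, hi⟩ := Set.mem_iUnion.1 h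
        rw [hg_tent i y hi]
        have h1 : 0 ≤ b i - a i := by linarith [hab i]
        have h2 : 0 ≤ min (y - a i) (b i - y) :=
          le_min (by linarith [hi.1]) (by linarith [hi.2])
        positivity
      · exact (hg_zero y hy h).ge
    by_cases h : x ∈ ⋃ i, Set.Ioo (a i) (b i)
    · obtain ⟨i, hi⟩ := Set.mem_iUnion.1 h
      have hL : 0 < b i - a i := by linarith [hab i]
      have e1 := le_abs_self (x - y)
      have e2 := neg_abs_le (x - y)
      have m1 := min_le_left (x - a i) (b i - x)
      have m2 := min_le_right (x - a i) (b i - x)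
      have hi1 := hi.1
      have hi2 := hi.2
      by_cases hyi : y ∈ Set.Ioo (a i) (b i)
      · rw [hg_tent i x hi, hg_tent i y hyi, ← mul_sub]
        have hy1 := hyi.1
        have hy2 := hyi.2
        apply tent_key _ _ _ hL _ _ (abs_nonneg _)
        · have : 0 ≤ min (y - a i) (b i - y) := le_min (by linarith) (by linarith)
          linarith
        · rcases min_choice (y - a i) (b i - y) with h | h <;> rw [h] <;> linarith
      · have : g x ≤ 4 * |x - y| ^ ((1 : ℝ) / 2) := by
          rw [hg_tent i x hi]
          apply tent_key _ _ _ hL _ _ (abs_nonneg _)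
          · linarith
          · by_cases h1 : a i < y
            · have : b i ≤ y := by
                by_contra h2
                exact hyi ⟨h1, not_le.1 h2⟩
              linarith
            · linarith
        linarith
    · rw [hg_zero x hx h]
      have : 0 ≤ 4 * |x - y| ^ ((1 : ℝ) / 2) := by positivity
      linarith
  intro x hx y hy
  have h2 := key y hy x hx
  rw [abs_sub_comm y x] at h2
  exact abs_le.2 ⟨by linarith, key x hx y hy⟩
end

section
/- Let M = 1 / (3^{2/3} − 2). There exists a strictly increasing function f : [0, M] → [0, 1] such that: f is continuously differentiable; its derivative f′ is 1/2-Hölder continuous with constant 4; f(0) = 0 and f(M) = 1; the set A = {x ∈ [0, M] : f′(x) = 0} has Lebesgue measure zero; and the image f(A) equals the Cantor ternary set C. -/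
open MeasureTheory

namespace HC
open Set Filter Topology
open scoped Pointwise

noncomputable def g (x : ℝ) : ℝ := max 0 (6 * x * (1 - x))

lemma g_nonneg (x : ℝ) : 0 ≤ g x := le_max_left _ _
lemma g_of_le {x : ℝ} (h : x ≤ 0) : g x = 0 := max_eq_left (by nlinarith)
lemma g_of_ge {x : ℝ} (h : 1 ≤ x) : g x = 0 := max_eq_left (by nlinarith)
lemma g_of_mem {x : ℝ} (h : 0 ≤ x) (h1 : x ≤ 1) : g x = 6 * x * (1 - x) :=
  max_eq_right (by nlinarith [mul_nonneg h (sub_nonneg.2 h1)])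
lemma g_pos {x : ℝ} (h : 0 < x) (h1 : x < 1) : 0 < g x := by
  rw [g_of_mem h.le h1.le]; have := mul_pos h (sub_pos.2 h1); linarith
lemma g_le (x : ℝ) : g x ≤ 3 / 2 := max_le (by norm_num) (by nlinarith [sq_nonneg (2 * x - 1)])
lemma g_cont : Continuous g := by unfold g; fun_prop

lemma g_sq_left {x : ℝ} (h : 0 ≤ x) : (g x) ^ 2 ≤ 16 * x := by
  rcases le_total x 1 with h1 | h1
  · rw [g_of_mem h h1]
    have h2 := mul_nonneg h (sub_nonneg.2 h1)
    have h3 : x * (1 - x) ≤ 1 / 4 := by nlinarith [sq_nonneg (2 * x - 1)]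
    nlinarith [mul_le_mul_of_nonneg_left h3 h2]
  · rw [g_of_ge h1]; nlinarith

lemma g_sq_right {x : ℝ} (h : x ≤ 1) : (g x) ^ 2 ≤ 16 * (1 - x) := by
  have : g x = g (1 - x) := by unfold g; ring_nf
  rw [this]; exact g_sq_left (by linarith)

lemma g_holder_aux {x y : ℝ} (hxy : x ≤ y) : (g x - g y) ^ 2 ≤ 16 * (y - x) := by
  rcases le_total x 0 with hx | hx
  · rw [g_of_le hx]
    rcases le_total y 0 with hy | hy
    · rw [g_of_le hy]; nlinarith
    · nlinarith [g_sq_left hy]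
  rcases le_total 1 y with hy | hy
  · rw [g_of_ge hy]
    rcases le_total 1 x with h | h
    · rw [g_of_ge h]; nlinarith
    · nlinarith [g_sq_right h]
  rw [g_of_mem hx (by linarith), g_of_mem (by linarith) hy]
  have e : 6 * x * (1 - x) - 6 * y * (1 - y) = -(6 * (y - x) * (1 - x - y)) := by ring
  obtain ⟨d, rfl⟩ : ∃ d, y = x + d := ⟨y - x, by ring⟩
  have hd : 0 ≤ d := by linarith
  have h1 : (1 - x - (x + d)) ^ 2 ≤ (1 - d) ^ 2 := by
    apply sq_le_sq'
    · linarith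
    · linarith
  have h2 : d * (1 - d) ^ 2 ≤ 1 / 4 := by
    have h3 : d * (1 - d) ≤ 1 / 4 := by nlinarith [sq_nonneg (2 * d - 1)]
    have h4 : 0 ≤ d * (1 - d) := mul_nonneg hd (by linarith)
    nlinarith
  rw [e]
  have h5 : d * (1 - x - (x + d)) ^ 2 ≤ 1 / 4 := (mul_le_mul_of_nonneg_left h1 hd).trans h2
  have h6 := mul_le_mul_of_nonneg_left h5 hd
  nlinarith

lemma g_holder (x y : ℝ) : (g x - g y) ^ 2 ≤ 16 * |x - y| := by
  rcases le_total x y with h | h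
  · rw [abs_of_nonpos (by linarith)]; have := g_holder_aux h; linarith
  · rw [abs_of_nonneg (by linarith)]; have := g_holder_aux h; nlinarith

/-- the derived set of invariants -/
structure P (M : ℝ) (G : ℝ → ℝ) : Prop where
  nn : ∀ x, 0 ≤ G x
  le : ∀ x, G x ≤ 3 / 2
  lo : ∀ x, x ≤ 0 → G x = 0
  hi : ∀ x, M ≤ x → G x = 0
  ho : ∀ x y, (G x - G y) ^ 2 ≤ 16 * |x - y|

noncomputable def T (q M : ℝ) (G : ℝ → ℝ) (x : ℝ) : ℝ :=
  q / 3 * (G (q * x) + g (q * x - M) + G (q * x - M - 1))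

section
variable {q M : ℝ}

lemma q_lt (hq : q ^ 3 = 9) (_hq2 : 2 < q) : q < 3 := by
  by_contra! h
  nlinarith [pow_le_pow_left₀ (by norm_num) h 3]

lemma T_cases {G : ℝ → ℝ} (hG : P M G) (x : ℝ) :
    (q * x ≤ M ∧ g (q * x - M) = 0 ∧ G (q * x - M - 1) = 0) ∨
    (M ≤ q * x ∧ q * x ≤ M + 1 ∧ G (q * x) = 0 ∧ G (q * x - M - 1) = 0) ∨
    (M + 1 ≤ q * x ∧ G (q * x) = 0 ∧ g (q * x - M) = 0) := by
  rcases le_total (q * x) M with h | h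
  · exact Or.inl ⟨h, g_of_le (by linarith), hG.lo _ (by linarith)⟩
  rcases le_total (q * x) (M + 1) with h1 | h1
  · exact Or.inr (Or.inl ⟨h, h1, hG.hi _ h, hG.lo _ (by linarith)⟩)
  · exact Or.inr (Or.inr ⟨h1, hG.hi _ h, g_of_ge (by linarith)⟩)

lemma sq_diff {a b D : ℝ} (ha : 0 ≤ a) (hb : 0 ≤ b) (h1 : a ^ 2 ≤ D) (h2 : b ^ 2 ≤ D) :
    (a - b) ^ 2 ≤ D := by
  rcases le_total a b with h | h <;> nlinarith [mul_nonneg ha hb]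

lemma P_T (hq : q ^ 3 = 9) (hq2 : 2 < q) (hM0 : 0 < M) (hM : M * (q - 2) = 1) {G : ℝ → ℝ}
    (hG : P M G) : P M (T q M G) where
  nn x := by
    unfold T
    have := hG.nn (q * x); have := hG.nn (q * x - M - 1); have := g_nonneg (q * x - M)
    positivity
  le x := by
    unfold T
    have h3 := q_lt hq hq2
    have : G (q * x) + g (q * x - M) + G (q * x - M - 1) ≤ 3 / 2 := by
      rcases T_cases (q := q) hG x with ⟨-, h, hh⟩ | ⟨-, -, h, hh⟩ | ⟨-, h, hh⟩ <;> rw [h, hh]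
      · linarith [hG.le (q * x)]
      · linarith [g_le (q * x - M)]
      · linarith [hG.le (q * x - M - 1)]
    have h0 : 0 ≤ G (q * x) + g (q * x - M) + G (q * x - M - 1) := by
      have := hG.nn (q * x); have := hG.nn (q * x - M - 1); have := g_nonneg (q * x - M)
      positivity
    nlinarith
  lo x hx := by
    unfold T
    have : q * x ≤ 0 := by nlinarith
    rw [hG.lo _ this, g_of_le (by linarith), hG.lo _ (by linarith)]; ring
  hi x hx := by
    unfold T
    have : 2 * M + 1 ≤ q * x := by nlinarith
    rw [hG.hi _ (by linarith), g_of_ge (by linarith), hG.hi _ (by linarith)]; ring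
  ho x y := by
    unfold T
    have hD : ∀ c, |(q * x - c) - (q * y - c)| = q * |x - y| := by
      intro c
      rw [show (q * x - c) - (q * y - c) = q * (x - y) by ring, abs_mul, abs_of_pos (by linarith)]
    have h1 := hG.ho (q * x) (q * y)
    have h2 := g_holder (q * x - M) (q * y - M)
    have h3 := hG.ho (q * x - M - 1) (q * y - M - 1)
    have e1 := hD 0
    rw [sub_zero, sub_zero] at e1
    have e3 := hD (M + 1)
    rw [← sub_sub, ← sub_sub] at e3
    rw [e1] at h1; rw [hD M] at h2; rw [e3] at h3
    have key : ((G (q * x) + g (q * x - M) + G (q * x - M - 1)) -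
        (G (q * y) + g (q * y - M) + G (q * y - M - 1))) ^ 2 ≤ 16 * (q * |x - y|) := by
      have n1 := hG.nn (q * x); have n2 := hG.nn (q * x - M - 1); have n3 := g_nonneg (q * x - M)
      have m1 := hG.nn (q * y); have m2 := hG.nn (q * y - M - 1); have m3 := g_nonneg (q * y - M)
      rcases T_cases (q := q) hG x with ⟨-, h, hh⟩ | ⟨-, -, h, hh⟩ | ⟨-, h, hh⟩ <;>
      rcases T_cases (q := q) hG y with ⟨-, k, kk⟩ | ⟨-, -, k, kk⟩ | ⟨-, k, kk⟩ <;>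
      rw [h, hh, k, kk] <;> simp only [h, hh, k, kk] at h1 h2 h3 <;>
      simp only [add_zero, zero_add, sub_zero, zero_sub, neg_sq] at h1 h2 h3 ⊢ <;>
      first | assumption | (apply sq_diff <;> assumption)
    have hr : (q / 3) ^ 2 * q = 1 := by rw [div_pow]; linarith
    calc _ = (q / 3) ^ 2 * ((G (q * x) + g (q * x - M) + G (q * x - M - 1)) -
        (G (q * y) + g (q * y - M) + G (q * y - M - 1))) ^ 2 := by ring
      _ ≤ (q / 3) ^ 2 * (16 * (q * |x - y|)) := by gcongr
      _ = (q / 3) ^ 2 * q * (16 * |x - y|) := by ring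
      _ = _ := by rw [hr, one_mul]

lemma exists_G (hq : q ^ 3 = 9) (hq2 : 2 < q) (hM0 : 0 < M) (hM : M * (q - 2) = 1) :
    ∃ G, P M G ∧ ∀ x, G x = T q M G x := by
  let S : ℕ → ℝ → ℝ := fun n => (T q M)^[n] (fun _ => 0)
  have hS : ∀ n, S (n + 1) = T q M (S n) := fun n => Function.iterate_succ_apply' _ _ _
  have hP : ∀ n, P M (S n) := by
    intro n
    induction n with
    | zero =>
      refine ⟨?_, ?_, ?_, ?_, ?_⟩ <;> intros <;> norm_num [S]
    | succ n ih => rw [hS]; exact P_T hq hq2 hM0 hM ih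
  have hmono : ∀ n x, S n x ≤ S (n + 1) x := by
    intro n
    induction n with
    | zero => intro x; exact (hP 1).nn x
    | succ n ih =>
      intro x
      rw [hS (n + 1)]
      nth_rw 1 [hS n]
      unfold T
      have := ih (q * x); have := ih (q * x - M - 1)
      gcongr
  have hlim : ∀ x, ∃ l, Tendsto (fun n => S n x) atTop (𝓝 l) := fun x =>
    ⟨_, tendsto_atTop_ciSup (monotone_nat_of_le_succ fun n => hmono n x)
      ⟨3 / 2, by rintro _ ⟨n, rfl⟩; exact (hP n).le x⟩⟩
  choose G hG using hlim
  refine ⟨G, ⟨fun x => ?_, fun x => ?_, fun x hx => ?_, fun x hx => ?_, fun x y => ?_⟩,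
    fun x => ?_⟩
  · exact ge_of_tendsto' (hG x) fun n => (hP n).nn x
  · exact le_of_tendsto' (hG x) fun n => (hP n).le x
  · exact tendsto_nhds_unique (hG x) (by simp [(hP _).lo x hx])
  · exact tendsto_nhds_unique (hG x) (by simp [(hP _).hi x hx])
  · exact le_of_tendsto' (((hG x).sub (hG y)).pow 2) fun n => (hP n).ho x y
  · have h1 := (tendsto_add_atTop_iff_nat 1).2 (hG x)
    simp only [hS] at h1
    refine tendsto_nhds_unique h1 ?_
    exact (((hG _).add tendsto_const_nhds).add (hG _)).const_mul _

lemma P.holder {G : ℝ → ℝ} (hG : P M G) (x y : ℝ) :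
    |G x - G y| ≤ 4 * |x - y| ^ ((1 : ℝ) / 2) := by
  rw [← Real.sqrt_eq_rpow]
  apply abs_le_of_sq_le_sq _ (by positivity)
  rw [mul_pow, Real.sq_sqrt (abs_nonneg _)]
  linarith [hG.ho x y]

lemma P.cont {G : ℝ → ℝ} (hG : P M G) : Continuous G := by
  rw [continuous_iff_continuousAt]
  intro y
  rw [ContinuousAt, tendsto_iff_dist_tendsto_zero]
  refine squeeze_zero (fun _ => dist_nonneg) (fun x => hG.holder x y) ?_
  have : Continuous fun x : ℝ => 4 * |x - y| ^ ((1 : ℝ) / 2) := by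
    refine continuous_const.mul (Continuous.rpow_const (by fun_prop) fun _ => Or.inr (by norm_num))
  have h := this.tendsto y
  simpa using h

lemma int_zero {h : ℝ → ℝ} {a b : ℝ} (hh : ∀ x ∈ uIcc a b, h x = 0) : ∫ t in a..b, h t = 0 := by
  rw [intervalIntegral.integral_congr (g := fun _ => 0) hh]; simp

lemma int_g_one : ∫ t in (0:ℝ)..1, g t = 1 := by
  rw [intervalIntegral.integral_congr (g := fun x => 6 * x - 6 * x ^ 2)]
  · rw [intervalIntegral.integral_sub
      (Continuous.intervalIntegrable (by fun_prop) _ _)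
      (Continuous.intervalIntegrable (by fun_prop) _ _),
      intervalIntegral.integral_const_mul, intervalIntegral.integral_const_mul,
      integral_id, integral_pow]
    norm_num
  · intro x hx
    rw [uIcc_of_le zero_le_one] at hx
    simp only [g_of_mem hx.1 hx.2]; ring

/-- Self-similarity of the primitive. -/
lemma prim_eq (hq2 : 2 < q) (hM0 : 0 < M) {G : ℝ → ℝ} (hG : P M G) (hT : ∀ x, G x = T q M G x)
    (x : ℝ) : ∫ t in (0:ℝ)..x, G t = 1 / 3 * ((∫ t in (0:ℝ)..(q * x), G t) +
      (∫ t in (0:ℝ)..(q * x - M), g t) + ∫ t in (0:ℝ)..(q * x - M - 1), G t) := by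
  have hq0 : q ≠ 0 := by linarith
  have c := hG.cont
  have cg := g_cont
  have i : ∀ a b, IntervalIntegrable G volume a b := fun a b => c.intervalIntegrable a b
  have ig : ∀ a b, IntervalIntegrable g volume a b := fun a b => cg.intervalIntegrable a b
  have e1 : ∫ t in (0:ℝ)..x, G t = ∫ t in (0:ℝ)..x, T q M G t :=
    intervalIntegral.integral_congr fun t _ => hT t
  have s1 : ∫ t in (0:ℝ)..x, G (q * t) = q⁻¹ * ∫ t in (0:ℝ)..(q * x), G t := by
    rw [intervalIntegral.integral_comp_mul_left G hq0]; simp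
  have s2 : ∫ t in (0:ℝ)..x, g (q * t - M) = q⁻¹ * ∫ t in (0:ℝ)..(q * x - M), g t := by
    rw [intervalIntegral.integral_comp_mul_sub g hq0]
    rw [← intervalIntegral.integral_add_adjacent_intervals (ig _ 0) (ig 0 _), int_zero]
    · simp
    · intro t ht; rw [uIcc_of_le (by linarith)] at ht; exact g_of_le ht.2
  have s3 : ∫ t in (0:ℝ)..x, G (q * t - M - 1) = q⁻¹ * ∫ t in (0:ℝ)..(q * x - M - 1), G t := by
    simp only [sub_sub]
    rw [intervalIntegral.integral_comp_mul_sub G hq0]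
    rw [← intervalIntegral.integral_add_adjacent_intervals (i _ 0) (i 0 _), int_zero]
    · simp
    · intro t ht; rw [uIcc_of_le (by linarith)] at ht; exact hG.lo _ ht.2
  rw [e1]
  unfold T
  rw [intervalIntegral.integral_const_mul, intervalIntegral.integral_add, intervalIntegral.integral_add,
    s1, s2, s3]
  · field_simp
  all_goals
    apply Continuous.intervalIntegrable; fun_prop

lemma main (hq : q ^ 3 = 9) (hq2 : 2 < q) (hM0 : 0 < M) (hM : M * (q - 2) = 1) :
    ∃ f f' : ℝ → ℝ,
      StrictMonoOn f (Set.Icc 0 M) ∧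
      Set.MapsTo f (Set.Icc 0 M) (Set.Icc 0 1) ∧
      (∀ x ∈ Set.Icc 0 M, HasDerivWithinAt f (f' x) (Set.Icc 0 M) x) ∧
      ContinuousOn f' (Set.Icc 0 M) ∧
      (∀ x ∈ Set.Icc 0 M, ∀ y ∈ Set.Icc 0 M,
        |f' x - f' y| ≤ 4 * |x - y| ^ ((1 : ℝ) / 2)) ∧
      f 0 = 0 ∧ f M = 1 ∧
      volume {x ∈ Set.Icc 0 M | f' x = 0} = 0 ∧
      f '' {x ∈ Set.Icc 0 M | f' x = 0} = cantorSet := by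
  obtain ⟨G, hG, hT⟩ := exists_G hq hq2 hM0 hM
  have c := hG.cont
  have i : ∀ a b, IntervalIntegrable G volume a b := fun a b => c.intervalIntegrable a b
  have ig : ∀ a b, IntervalIntegrable g volume a b := fun a b => g_cont.intervalIntegrable a b
  have hq0 : 0 < q := by linarith
  have hqM : q * M = 2 * M + 1 := by linarith
  set f : ℝ → ℝ := fun x => ∫ t in (0:ℝ)..x, G t with hf
  have feq : ∀ x, f x = 1 / 3 * (f (q * x) + (∫ t in (0:ℝ)..(q * x - M), g t) + f (q * x - M - 1)) :=
    fun x => prim_eq hq2 hM0 hG hT x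
  have f0 : f 0 = 0 := by simp [hf]
  have flo : ∀ x, x ≤ 0 → f x = 0 := by
    intro x hx
    refine int_zero fun t ht => ?_
    rw [uIcc_of_ge hx] at ht; exact hG.lo _ ht.2
  have fhi : ∀ x, M ≤ x → f x = f M := by
    intro x hx
    simp only [hf]
    rw [← intervalIntegral.integral_add_adjacent_intervals (i 0 M) (i M x),
      int_zero (a := M), add_zero]
    intro t ht; rw [uIcc_of_le hx] at ht; exact hG.hi _ ht.1
  have glo : ∀ x, x ≤ 0 → ∫ t in (0:ℝ)..x, g t = 0 := by
    intro x hx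
    refine int_zero fun t ht => ?_
    rw [uIcc_of_ge hx] at ht; exact g_of_le ht.2
  have ghi : ∀ x, 1 ≤ x → ∫ t in (0:ℝ)..x, g t = 1 := by
    intro x hx
    rw [← intervalIntegral.integral_add_adjacent_intervals (ig 0 1) (ig 1 x),
      int_zero (a := 1), add_zero, int_g_one]
    intro t ht; rw [uIcc_of_le hx] at ht; exact g_of_ge ht.1
  have fM : f M = 1 := by
    have h := feq M
    rw [fhi (q * M) (by linarith), ghi _ (by linarith), fhi (q * M - M - 1) (by linarith)] at h
    linarith
  have fl : ∀ a ∈ Icc 0 M, f (a / q) = f a / 3 := by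
    intro a ha
    rw [feq, mul_div_cancel₀ _ hq0.ne', glo _ (by linarith [ha.2]), flo (a - M - 1) (by linarith [ha.2])]
    ring
  have fr : ∀ a ∈ Icc 0 M, f ((M + 1 + a) / q) = (2 + f a) / 3 := by
    intro a ha
    rw [feq, mul_div_cancel₀ _ hq0.ne', ghi _ (by linarith [ha.1]), fhi _ (by linarith [ha.1]), fM,
      show M + 1 + a - M - 1 = a by ring]
    ring
  set A : Set ℝ := {x ∈ Set.Icc 0 M | G x = 0} with hA
  have hAsub : A ⊆ Icc 0 M := fun x hx => hx.1
  have hAeq : A = (fun a => a / q) '' A ∪ (fun a => (M + 1 + a) / q) '' A := by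
    apply Subset.antisymm
    · rintro x ⟨⟨hx0, hxM⟩, hx⟩
      have hqx0 : 0 ≤ q * x := by positivity
      have hqx1 : q * x ≤ 2 * M + 1 := by nlinarith
      have hx' := hT x
      rw [hx] at hx'
      unfold T at hx'
      have hsum : G (q * x) + g (q * x - M) + G (q * x - M - 1) = 0 := by
        rcases mul_eq_zero.1 hx'.symm with h | h
        · linarith
        · exact h
      have n1 := hG.nn (q * x); have n2 := hG.nn (q * x - M - 1); have n3 := g_nonneg (q * x - M)
      rcases le_or_gt (q * x) M with h | h
      · exact Or.inl ⟨q * x, ⟨⟨hqx0, h⟩, by linarith⟩, by field_simp⟩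
      · have h1 : M + 1 ≤ q * x := by
          by_contra! h1
          have := g_pos (x := q * x - M) (by linarith) (by linarith)
          linarith
        exact Or.inr ⟨q * x - M - 1, ⟨⟨by linarith, by linarith⟩, by linarith⟩, by
          simp only; field_simp; ring⟩
    · rintro x (⟨a, ⟨⟨h0, h1⟩, h2⟩, rfl⟩ | ⟨a, ⟨⟨h0, h1⟩, h2⟩, rfl⟩)
      · refine ⟨⟨by positivity, ?_⟩, ?_⟩
        · rw [div_le_iff₀ hq0]; nlinarith
        · simp only
          rw [hT, T, mul_div_cancel₀ _ hq0.ne', h2, g_of_le (by linarith), hG.lo _ (by linarith)]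
          ring
      · refine ⟨⟨by positivity, ?_⟩, ?_⟩
        · rw [div_le_iff₀ hq0]; nlinarith
        · simp only
          rw [hT, T, mul_div_cancel₀ _ hq0.ne', hG.hi _ (by linarith), g_of_ge (by linarith),
            show M + 1 + a - M - 1 = a by ring, h2]
          ring
  have hAcl : IsClosed A := isClosed_Icc.inter (isClosed_eq c continuous_const)
  have hAc : IsCompact A := isCompact_Icc.of_isClosed_subset hAcl hAsub
  have hvol : volume A = 0 := by
    have hfin : volume A ≠ ⊤ := hAc.measure_lt_top.ne
    have v1 : volume ((fun a => a / q) '' A) = ENNReal.ofReal q⁻¹ * volume A := by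
      have : (fun a => a / q) '' A = q⁻¹ • A := by
        ext x; simp [Set.mem_smul_set, div_eq_inv_mul]
      rw [this, Measure.addHaar_smul]; simp [abs_of_pos hq0]
    have v2 : volume ((fun a => (M + 1 + a) / q) '' A) = ENNReal.ofReal q⁻¹ * volume A := by
      have : (fun a => (M + 1 + a) / q) '' A = (fun t => (M + 1) / q + t) '' ((fun a => a / q) '' A) := by
        rw [image_image]; simp only [add_div]
      rw [this, ← v1]
      simp
    have hle : volume A ≤ ENNReal.ofReal q⁻¹ * volume A + ENNReal.ofReal q⁻¹ * volume A := by
      calc volume A = volume ((fun a => a / q) '' A ∪ (fun a => (M + 1 + a) / q) '' A) := by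
            rw [← hAeq]
        _ ≤ _ := by rw [← v1]; nth_rw 2 [v1]; rw [← v2]; exact measure_union_le _ _
    obtain ⟨v, hv⟩ : ∃ v, v = (volume A).toReal := ⟨_, rfl⟩
    have hv0 : 0 ≤ v := hv ▸ ENNReal.toReal_nonneg
    have hA' : volume A = ENNReal.ofReal v := by rw [hv, ENNReal.ofReal_toReal hfin]
    have hqi : 0 < q⁻¹ := by positivity
    rw [hA', ← ENNReal.ofReal_mul hqi.le, ← ENNReal.ofReal_add (by positivity) (by positivity),
      ENNReal.ofReal_le_ofReal_iff (by positivity)] at hle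
    have hqi2 : q⁻¹ < 2⁻¹ := by gcongr
    have : v = 0 := by nlinarith
    rw [hA', this]; simp
  have hmono : StrictMonoOn f (Icc 0 M) := by
    intro x hx y hy hxy
    have e : f y - f x = ∫ t in x..y, G t := intervalIntegral.integral_interval_sub_left (i _ _) (i _ _)
    have : 0 < ∫ t in x..y, G t := by
      apply intervalIntegral.integral_pos hxy c.continuousOn (fun t _ => hG.nn t)
      by_contra! hcon
      have hs : Icc x y ⊆ A := fun t ht =>
        ⟨⟨hx.1.trans ht.1, ht.2.trans hy.2⟩, le_antisymm (hcon t ht) (hG.nn t)⟩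
      have h := measure_mono_null hs hvol
      rw [Real.volume_Icc, ENNReal.ofReal_eq_zero] at h
      linarith
    linarith
  have hder : ∀ x, HasDerivAt f (G x) x := fun x => c.integral_hasStrictDerivAt 0 x |>.hasDerivAt
  have hmaps : MapsTo f (Icc 0 M) (Icc 0 1) := by
    intro x hx
    constructor
    · rw [← f0]; exact hmono.monotoneOn ⟨le_rfl, hM0.le⟩ hx hx.1
    · rw [← fM]; exact hmono.monotoneOn hx ⟨hM0.le, le_rfl⟩ hx.2
  have fcont : Continuous f := continuous_iff_continuousAt.2 fun x => (hder x).continuousAt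
  refine ⟨f, G, hmono, hmaps, fun x _ => (hder x).hasDerivWithinAt, c.continuousOn,
    fun x _ y _ => hG.holder x y, f0, fM, hvol, ?_⟩
  have hDcl : IsClosed (f '' A) := (hAc.image fcont).isClosed
  have h0A : (0:ℝ) ∈ A := ⟨⟨le_rfl, hM0.le⟩, hG.lo _ le_rfl⟩
  apply Subset.antisymm
  · rintro _ ⟨a, ha, rfl⟩
    rw [cantorSet, mem_iInter]
    intro n
    induction n generalizing a with
    | zero => exact hmaps (hAsub ha)
    | succ n ih =>
      change a ∈ A at ha
      rw [hAeq] at ha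
      rcases ha with ⟨b, hb, rfl⟩ | ⟨b, hb, rfl⟩
      · exact Or.inl ⟨f b, ih b hb, (fl b (hAsub hb)).symm⟩
      · exact Or.inr ⟨f b, ih b hb, (fr b (hAsub hb)).symm⟩
  · have key : ∀ n : ℕ, ∀ x ∈ cantorSet, ∃ a ∈ A, |x - f a| ≤ (1 / 3) ^ n := by
      intro n
      induction n with
      | zero =>
        intro x hx
        have := cantorSet_subset_unitInterval hx
        refine ⟨0, h0A, ?_⟩
        rw [f0, sub_zero, abs_of_nonneg this.1]; simpa using this.2
      | succ n ih =>
        intro x hx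
        rw [cantorSet_eq_union_halves] at hx
        rcases hx with ⟨y, hy, rfl⟩ | ⟨y, hy, rfl⟩
        · obtain ⟨a, ha, h⟩ := ih y hy
          refine ⟨a / q, by rw [hAeq]; exact Or.inl ⟨a, ha, rfl⟩, ?_⟩
          simp only
          rw [fl a (hAsub ha), show y / 3 - f a / 3 = (y - f a) * (1 / 3) by ring, abs_mul, pow_succ,
            abs_of_pos (show (0:ℝ) < 1 / 3 by norm_num)]
          gcongr
        · obtain ⟨a, ha, h⟩ := ih y hy
          refine ⟨(M + 1 + a) / q, by rw [hAeq]; exact Or.inr ⟨a, ha, rfl⟩, ?_⟩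
          simp only
          rw [fr a (hAsub ha), show (2 + y) / 3 - (2 + f a) / 3 = (y - f a) * (1 / 3) by ring, abs_mul,
            pow_succ, abs_of_pos (show (0:ℝ) < 1 / 3 by norm_num)]
          gcongr
    intro x hx
    rw [← hDcl.closure_eq, Metric.mem_closure_iff]
    intro ε hε
    obtain ⟨n, hn⟩ := exists_pow_lt_of_lt_one hε (show (1 / 3 : ℝ) < 1 by norm_num)
    obtain ⟨a, ha, h⟩ := key n x hx
    exact ⟨f a, mem_image_of_mem f ha, by rw [Real.dist_eq]; linarith⟩

end
end HC

/-- With `M = 1 / (3^{2/3} - 2)`, there is a strictly increasing `C¹` function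
`f : [0, M] → [0, 1]` whose derivative is `1/2`-Hölder with constant `4`,
with `f 0 = 0`, `f M = 1`, whose critical set `A = {x ∈ [0, M] : f' x = 0}` is
Lebesgue-null and satisfies `f(A) = C`, the Cantor ternary set. -/
theorem exists_C1_half_holder_deriv_image_cantorSet :
    ∃ (M : ℝ), M = 1 / ((3 : ℝ) ^ ((2 : ℝ) / 3) - 2) ∧
    ∃ f f' : ℝ → ℝ,
      StrictMonoOn f (Set.Icc 0 M) ∧
      Set.MapsTo f (Set.Icc 0 M) (Set.Icc 0 1) ∧
      (∀ x ∈ Set.Icc 0 M, HasDerivWithinAt f (f' x) (Set.Icc 0 M) x) ∧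
      ContinuousOn f' (Set.Icc 0 M) ∧
      (∀ x ∈ Set.Icc 0 M, ∀ y ∈ Set.Icc 0 M,
        |f' x - f' y| ≤ 4 * |x - y| ^ ((1 : ℝ) / 2)) ∧
      f 0 = 0 ∧ f M = 1 ∧
      volume {x ∈ Set.Icc 0 M | f' x = 0} = 0 ∧
      f '' {x ∈ Set.Icc 0 M | f' x = 0} = cantorSet := by
  have hq : ((3 : ℝ) ^ ((2 : ℝ) / 3)) ^ 3 = 9 := by
    rw [← Real.rpow_natCast, ← Real.rpow_mul (by norm_num)]
    norm_num
  have hq0 : 0 ≤ (3 : ℝ) ^ ((2 : ℝ) / 3) := by positivity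
  have hq2 : 2 < (3 : ℝ) ^ ((2 : ℝ) / 3) := by
    by_contra! h
    have := pow_le_pow_left₀ hq0 h 3
    linarith
  refine ⟨_, rfl, HC.main hq hq2 (one_div_pos.2 (by linarith)) ?_⟩
  rw [one_div, inv_mul_cancel₀ (by linarith)]
end

section
/- Let M = 1 / (3^{2/3} − 2). There exists a function F : ℝ² → ℝ, continuously differentiable on [0, M]², whose gradient ∇F is 1/2-Hölder continuous on [0, M]², such that every u ∈ [0, 2] is a critical value of F: for every u ∈ [0, 2] there exists (x, y) ∈ [0, M]² with ∇F(x, y) = (0, 0) and F(x, y) = u. -/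
namespace SardEx

open Filter Topology

/-- A smooth function: `1` above `.8`, `0` on `[-.6,.6]`, `-1` below `-.8`. -/
noncomputable def S (c : ℝ) : ℝ := Real.smoothTransition (5*c-3) - Real.smoothTransition (-5*c-3)

noncomputable def h (t : ℝ) : ℝ := S (Real.sin (2*Real.pi*t))

lemma S_contDiff : ContDiff ℝ 2 S := by
  unfold S
  refine ContDiff.sub ?_ ?_
  · exact Real.smoothTransition.contDiff.comp (by fun_prop)
  · exact Real.smoothTransition.contDiff.comp (by fun_prop)

lemma h_contDiff : ContDiff ℝ 2 h := by
  unfold h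
  exact S_contDiff.comp (Real.contDiff_sin.comp (by fun_prop))

lemma h_periodic : Function.Periodic h 1 := by
  intro t
  unfold h
  rw [mul_add, mul_one, Real.sin_add_two_pi]

lemma h_add_int (t : ℝ) (m : ℤ) : h (t + m) = h t := by
  simpa using (h_periodic.int_mul m) t

lemma dh_periodic : Function.Periodic (deriv h) 1 := by
  intro t
  have : (fun x => h (x + 1)) = h := funext h_periodic
  rw [← deriv_comp_add_const, this]

lemma dh_add_int (t : ℝ) (m : ℤ) : deriv h (t + m) = deriv h t := by
  simpa using (dh_periodic.int_mul m) t

lemma ddh_periodic : Function.Periodic (deriv (deriv h)) 1 := by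
  intro t
  have : (fun x => deriv h (x + 1)) = deriv h := funext dh_periodic
  rw [← deriv_comp_add_const, this]

lemma bdd_of_periodic (g : ℝ → ℝ) (hg : Continuous g) (hp : Function.Periodic g 1) :
    ∃ C, 0 ≤ C ∧ ∀ t, |g t| ≤ C := by
  obtain ⟨C, hC⟩ := (isCompact_Icc (a := (0:ℝ)) (b := 1)).exists_bound_of_continuousOn
    hg.continuousOn
  have key : ∀ t, |g t| ≤ C := by
    intro t
    have h1 := hp.sub_int_mul_eq (x := t) ⌊t⌋
    rw [← h1]
    apply hC
    constructor
    · have := Int.floor_le t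
      rw [mul_one]; linarith
    · have := Int.lt_floor_add_one t
      rw [mul_one]; linarith
  exact ⟨C, (abs_nonneg _).trans (key 0), key⟩

lemma dh_contDiff : ContDiff ℝ 1 (deriv h) := by
  have := h_contDiff
  rw [show (2 : WithTop ℕ∞) = 1 + 1 by norm_num, contDiff_succ_iff_deriv] at this
  exact this.2.2

lemma dh_holder : ∃ C, 0 ≤ C ∧ (∀ t, |deriv h t| ≤ C) ∧
    ∀ s t, |deriv h s - deriv h t| ≤ C * Real.sqrt |s - t| := by
  obtain ⟨A, hA0, hA⟩ := bdd_of_periodic (deriv h) dh_contDiff.continuous dh_periodic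
  obtain ⟨B, hB0, hB⟩ := bdd_of_periodic (deriv (deriv h))
    (dh_contDiff.continuous_deriv le_rfl) ddh_periodic
  have hL : ∀ s t, |deriv h s - deriv h t| ≤ B * |s - t| := by
    intro s t
    exact Convex.norm_image_sub_le_of_norm_deriv_le (𝕜 := ℝ) (s := Set.univ)
      (fun x _ => (dh_contDiff.differentiable one_ne_zero) x) (fun x _ => hB x) convex_univ
      (Set.mem_univ t) (Set.mem_univ s)
  refine ⟨2 * A + B, by positivity, fun t => by linarith [hA t], fun s t => ?_⟩
  set r := Real.sqrt |s - t| with hr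
  have hr0 : 0 ≤ r := Real.sqrt_nonneg _
  have hrr : |s - t| = r * r := (Real.mul_self_sqrt (abs_nonneg _)).symm
  have h1 := hL s t
  have h2 : |deriv h s - deriv h t| ≤ 2 * A := by
    have := abs_sub (deriv h s) (deriv h t)
    linarith [hA s, hA t]
  rw [hrr] at h1
  rcases le_total r 1 with h3 | h3
  · nlinarith [mul_nonneg hA0 hr0, mul_le_mul_of_nonneg_left h3 (mul_nonneg hB0 hr0)]
  · nlinarith [mul_nonneg hB0 hr0, mul_le_mul_of_nonneg_left h3 hA0]

lemma S_one {c : ℝ} (hc : 4/5 ≤ c) : S c = 1 := by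
  unfold S
  rw [Real.smoothTransition.one_of_one_le (by linarith),
    Real.smoothTransition.zero_of_nonpos (by linarith)]; norm_num

lemma S_neg_one {c : ℝ} (hc : c ≤ -(4/5)) : S c = -1 := by
  unfold S
  rw [Real.smoothTransition.one_of_one_le (x := -5*c-3) (by linarith),
    Real.smoothTransition.zero_of_nonpos (by linarith)]; norm_num

lemma S_zero {c : ℝ} (hc : c ≤ 3/5) (hc' : -(3/5) ≤ c) : S c = 0 := by
  unfold S
  rw [Real.smoothTransition.zero_of_nonpos (by linarith),
    Real.smoothTransition.zero_of_nonpos (by linarith)]; norm_num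

lemma h_ev {t v : ℝ} (he : ∀ᶠ s in 𝓝 t, h s = v) : h t = v ∧ deriv h t = 0 := by
  refine ⟨he.self_of_nhds, ?_⟩
  have : h =ᶠ[𝓝 t] fun _ => v := he
  rw [this.deriv_eq, deriv_const]

lemma cos_big {d : ℝ} (hd : |d| ≤ 1/12) : 4/5 < Real.cos (2*Real.pi*d) := by
  have hpi := Real.pi_pos
  rw [← Real.cos_abs]
  have h1 : |2*Real.pi*d| ≤ Real.pi/6 := by
    rw [abs_mul, abs_of_pos (by positivity : 0 < 2*Real.pi)]
    nlinarith
  have := Real.cos_le_cos_of_nonneg_of_le_pi (abs_nonneg (2*Real.pi*d)) (by linarith) h1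
  rw [Real.cos_pi_div_six] at this
  have h3 : (1.7:ℝ) ≤ Real.sqrt 3 := Real.le_sqrt_of_sq_le (by norm_num)
  linarith

lemma sin_small {d : ℝ} (hd : |d| ≤ 1/12) : |Real.sin (2*Real.pi*d)| < 3/5 := by
  have h1 := cos_big hd
  have h2 := Real.sin_sq_add_cos_sq (2*Real.pi*d)
  apply abs_lt_of_sq_lt_sq _ (by norm_num)
  nlinarith

lemma h_digit (e : ℤ) (he : |e| ≤ 1) (t : ℝ) (ht : |t - e/4| ≤ 1/12) :
    h t = e ∧ deriv h t = 0 := by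
  have hcont : Continuous fun s : ℝ => Real.sin (2*Real.pi*s) := by fun_prop
  have hc := cos_big ht
  have hs := sin_small ht
  rw [abs_le] at he
  obtain ⟨h1, h2⟩ := he
  apply h_ev
  interval_cases e
  · have : Real.sin (2*Real.pi*t) < -(4/5) := by
      have : Real.sin (2*Real.pi*t) = - Real.cos (2*Real.pi*(t - ((-1:ℤ):ℝ)/4)) := by
        rw [← Real.sin_sub_pi_div_two]; congr 1; push_cast; ring
      linarith
    filter_upwards [hcont.continuousAt.eventually_lt continuousAt_const this] with s hs
    rw [h, S_neg_one hs.le]; norm_num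
  · simp only [Int.cast_zero, zero_div, sub_zero] at hs
    rw [abs_lt] at hs
    filter_upwards [hcont.continuousAt.eventually_lt continuousAt_const hs.2,
      continuousAt_const.eventually_lt hcont.continuousAt hs.1] with s hs hs'
    rw [h, S_zero hs.le hs'.le]; norm_num
  · have : 4/5 < Real.sin (2*Real.pi*t) := by
      have : Real.sin (2*Real.pi*t) = Real.cos (2*Real.pi*(t - ((1:ℤ):ℝ)/4)) := by
        rw [← Real.sin_add_pi_div_two]; congr 1; push_cast; ring
      linarith
    filter_upwards [continuousAt_const.eventually_lt hcont.continuousAt this] with s hs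
    rw [h, S_one hs.le]; norm_num

noncomputable def X (e : ℕ → ℤ) : ℝ := ∑' k, (e k : ℝ) * (1/4)^(k+1)

lemma hasSum_geo : HasSum (fun k : ℕ => (1/4:ℝ)^(k+1)) (1/3) := by
  have := (hasSum_geometric_of_lt_one (r := (1/4:ℝ)) (by norm_num) (by norm_num)).mul_right (1/4)
  norm_num at this
  simpa [pow_succ] using this

lemma X_norm (e : ℕ → ℤ) (he : ∀ k, |e k| ≤ 1) (k : ℕ) :
    ‖(e k : ℝ) * (1/4)^(k+1)‖ ≤ (1/4)^(k+1) := by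
  rw [norm_mul, Real.norm_eq_abs, Real.norm_of_nonneg (by positivity : (0:ℝ) ≤ (1/4)^(k+1))]
  have : |(e k : ℝ)| ≤ 1 := by exact_mod_cast he k
  exact mul_le_of_le_one_left (by positivity) this

lemma X_le (e : ℕ → ℤ) (he : ∀ k, |e k| ≤ 1) : |X e| ≤ 1/3 :=
  tsum_of_norm_bounded hasSum_geo (X_norm e he)

lemma X_succ (e : ℕ → ℤ) (he : ∀ k, |e k| ≤ 1) :
    X e = e 0 / 4 + X (fun k => e (k+1)) / 4 := by
  have hs : Summable (fun k => (e k : ℝ) * (1/4)^(k+1)) :=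
    Summable.of_norm_bounded hasSum_geo.summable (X_norm e he)
  unfold X
  rw [hs.tsum_eq_zero_add, ← tsum_div_const]
  congr 1
  · simp; ring
  · congr 1; ext k; ring

lemma X_shift (e : ℕ → ℤ) (he : ∀ k, |e k| ≤ 1) (n : ℕ) :
    ∃ m : ℤ, 4^n * X e = X (fun k => e (k+n)) + m := by
  induction n with
  | zero => exact ⟨0, by simp⟩
  | succ n ih =>
    obtain ⟨m, hm⟩ := ih
    refine ⟨4*m + e n, ?_⟩
    rw [pow_succ', mul_assoc, hm, X_succ _ (fun k => he _)]
    have : (fun k => e (k + 1 + n)) = fun k => e (k + (n+1)) := by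
      ext k; congr 1; ring
    rw [this]; push_cast; simp only [zero_add]; ring

lemma h_X (e : ℕ → ℤ) (he : ∀ k, |e k| ≤ 1) (n : ℕ) :
    h (4^n * (X e + 1)) = e n ∧ deriv h (4^n * (X e + 1)) = 0 := by
  obtain ⟨m, hm⟩ := X_shift e he n
  have : (4:ℝ)^n * (X e + 1) = X (fun k => e (k+n)) + ((m + 4^n : ℤ) : ℝ) := by
    rw [mul_add, hm]; push_cast; ring
  rw [this, h_add_int, dh_add_int]
  apply h_digit _ (he n)
  rw [X_succ _ (fun k => he _)]
  have := X_le (fun k => e (k+1+n)) (fun k => he _)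
  simp only [zero_add]
  rw [abs_le] at *
  constructor <;> linarith

noncomputable def f (x : ℝ) : ℝ := ∑' n : ℕ, (1/9:ℝ)^n * h (4^n * x)
noncomputable def fd (x : ℝ) : ℝ := ∑' n : ℕ, (4/9:ℝ)^n * deriv h (4^n * x)

lemma f_summable (x : ℝ) : Summable fun n : ℕ => (1/9:ℝ)^n * h (4^n * x) := by
  obtain ⟨C, hC0, hC⟩ := bdd_of_periodic h h_contDiff.continuous h_periodic
  refine Summable.of_norm_bounded (g := fun n : ℕ => (1/9:ℝ)^n * C) ?_ ?_
  · exact (summable_geometric_of_lt_one (by norm_num) (by norm_num)).mul_right C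
  · intro n
    rw [norm_mul, Real.norm_of_nonneg (by positivity : (0:ℝ) ≤ (1/9)^n)]
    exact mul_le_mul_of_nonneg_left (hC _) (by positivity)

lemma fd_bound {C : ℝ} (hC : ∀ t, |deriv h t| ≤ C) (n : ℕ) (x : ℝ) :
    ‖(4/9:ℝ)^n * deriv h (4^n * x)‖ ≤ (4/9:ℝ)^n * C := by
  rw [norm_mul, Real.norm_of_nonneg (by positivity : (0:ℝ) ≤ (4/9)^n)]
  exact mul_le_mul_of_nonneg_left (hC _) (by positivity)

lemma geo49 (C : ℝ) : Summable fun n : ℕ => (4/9:ℝ)^n * C :=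
  (summable_geometric_of_lt_one (by norm_num) (by norm_num)).mul_right C

lemma f_hasDerivAt (x : ℝ) : HasDerivAt f (fd x) x := by
  obtain ⟨C, hC0, hC, -⟩ := dh_holder
  refine hasDerivAt_tsum (geo49 C) (g := fun n x => (1/9:ℝ)^n * h (4^n * x))
    (g' := fun n x => (4/9:ℝ)^n * deriv h (4^n * x)) ?_ (fun n x => fd_bound hC n x)
    (f_summable 0) x
  intro n y
  have h1 : HasDerivAt h (deriv h (4^n*y)) (4^n*y) :=
    (h_contDiff.differentiable two_ne_zero _).hasDerivAt
  have h2 : HasDerivAt (fun y : ℝ => 4^n * y) (4^n) y := by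
    simpa using (hasDerivAt_id y).const_mul ((4:ℝ)^n)
  have h3 := (h1.comp y h2).const_mul ((1/9:ℝ)^n)
  have h4 : (1/9:ℝ)^n * (deriv h (4^n*y) * 4^n) = (4/9:ℝ)^n * deriv h (4^n * y) := by
    rw [show (4/9:ℝ) = 1/9*4 by norm_num, mul_pow]; ring
  rw [h4] at h3
  exact h3

lemma fd_holder : ∃ K, 0 ≤ K ∧ ∀ x y, |fd x - fd y| ≤ K * Real.sqrt |x - y| := by
  obtain ⟨C, hC0, hC, hH⟩ := dh_holder
  have hsum (x : ℝ) : Summable fun n : ℕ => (4/9:ℝ)^n * deriv h (4^n * x) :=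
    Summable.of_norm_bounded (geo49 C) (fun n => fd_bound hC n x)
  refine ⟨9 * C, by positivity, fun x y => ?_⟩
  unfold fd
  rw [← (hsum x).tsum_sub (hsum y)]
  have hg : HasSum (fun n : ℕ => (8/9:ℝ)^n * (C * Real.sqrt |x-y|))
      (9 * C * Real.sqrt |x - y|) := by
    have := (hasSum_geometric_of_lt_one (r := (8/9:ℝ)) (by norm_num) (by norm_num)).mul_right
      (C * Real.sqrt |x-y|)
    have h9 : (1 - 8/9:ℝ)⁻¹ * (C * Real.sqrt |x-y|) = 9 * C * Real.sqrt |x - y| := by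
      norm_num; ring
    rwa [h9] at this
  rw [← Real.norm_eq_abs]
  refine tsum_of_norm_bounded hg (fun n => ?_)
  rw [← mul_sub, norm_mul, Real.norm_of_nonneg (by positivity : (0:ℝ) ≤ (4/9)^n)]
  have h1 := hH (4^n*x) (4^n*y)
  have h2 : Real.sqrt |4^n*x - 4^n*y| = 2^n * Real.sqrt |x-y| := by
    rw [← mul_sub, abs_mul, abs_of_pos (by positivity : (0:ℝ) < 4^n),
      Real.sqrt_mul (by positivity)]
    congr 1
    rw [show (4:ℝ)^n = (2^n)^2 by rw [← pow_mul, mul_comm, pow_mul]; norm_num]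
    exact Real.sqrt_sq (by positivity)
  rw [h2] at h1
  calc _ ≤ (4/9:ℝ)^n * (C * (2^n * Real.sqrt |x-y|)) :=
        mul_le_mul_of_nonneg_left h1 (by positivity)
    _ = _ := by
      rw [show (8/9:ℝ) = 4/9*2 by norm_num, mul_pow]; ring

lemma fd_continuous : Continuous fd := by
  obtain ⟨C, hC0, hC, -⟩ := dh_holder
  refine continuous_tsum (fun n => ?_) (geo49 C) (fun n x => fd_bound hC n x)
  exact continuous_const.mul (dh_contDiff.continuous.comp (by fun_prop))

lemma f_contDiff : ContDiff ℝ 1 f := by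
  rw [contDiff_one_iff_deriv]
  refine ⟨fun x => (f_hasDerivAt x).differentiableAt, ?_⟩
  rw [show deriv f = fd from funext fun x => (f_hasDerivAt x).deriv]
  exact fd_continuous

lemma digit (u : ℝ) (hu : |u| ≤ 9/2) : ∃ a b : ℤ, |a| ≤ 1 ∧ |b| ≤ 1 ∧
    |9 * (u - (a + 3 * b))| ≤ 9/2 := by
  have h3 : ∀ (s v : ℝ), |v| ≤ 3 * s → ∃ a : ℤ, |a| ≤ 1 ∧ |v - 2*s * a| ≤ s := by
    intro s v hv
    rw [abs_le] at hv
    by_cases h1 : s < v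
    · exact ⟨1, by simp, by rw [abs_le]; push_cast; constructor <;> linarith⟩
    by_cases h2 : v < -s
    · exact ⟨-1, by simp, by rw [abs_le]; push_cast; constructor <;> linarith⟩
    exact ⟨0, by simp, by rw [abs_le]; push_cast; constructor <;> linarith⟩
  obtain ⟨b, hb, hb'⟩ := h3 (3/2) u (by linarith)
  obtain ⟨a, ha, ha'⟩ := h3 (1/2) _ (by linarith : |u - 2*(3/2)*b| ≤ 3*(1/2))
  refine ⟨a, b, ha, hb, ?_⟩
  rw [abs_le] at *
  constructor <;> linarith

lemma expansion (u : ℝ) (hu : |u| ≤ 9/2) : ∃ a b : ℕ → ℤ, (∀ n, |a n| ≤ 1) ∧ (∀ n, |b n| ≤ 1) ∧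
    Tendsto (fun n => ∑ k ∈ Finset.range n, (1/9:ℝ)^k * ((a k : ℝ) + 3 * b k)) atTop (𝓝 u) := by
  choose A B hA hB hAB using digit
  let T : {u : ℝ // |u| ≤ 9/2} → {u : ℝ // |u| ≤ 9/2} := fun v =>
    ⟨9 * (v.1 - (A v.1 v.2 + 3 * B v.1 v.2)), hAB v.1 v.2⟩
  let w : ℕ → {u : ℝ // |u| ≤ 9/2} := fun n => T^[n] ⟨u, hu⟩
  have hw (n : ℕ) : (w (n+1)).1 = 9 * ((w n).1 - (A (w n).1 (w n).2 + 3 * B (w n).1 (w n).2)) := by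
    simp only [w, Function.iterate_succ_apply']
    rfl
  refine ⟨fun n => A (w n).1 (w n).2, fun n => B (w n).1 (w n).2, fun n => hA _ _,
    fun n => hB _ _, ?_⟩
  have hs (n : ℕ) : ∑ k ∈ Finset.range n, (1/9:ℝ)^k *
      ((A (w k).1 (w k).2 : ℝ) + 3 * B (w k).1 (w k).2) = u - (1/9)^n * (w n).1 := by
    induction n with
    | zero => simp [w]
    | succ n ih => rw [Finset.sum_range_succ, ih, hw, pow_succ]; ring
  simp only [hs]
  have h0 : Tendsto (fun n => (1/9:ℝ)^n * (w n).1) atTop (𝓝 0) := by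
    have hg : Tendsto (fun n : ℕ => (1/9:ℝ)^n * (9/2)) atTop (𝓝 0) := by
      simpa using (tendsto_pow_atTop_nhds_zero_of_lt_one (r := (1/9:ℝ)) (by norm_num)
        (by norm_num)).mul_const (9/2)
    refine squeeze_zero_norm (fun n => ?_) hg
    rw [norm_mul, Real.norm_of_nonneg (by positivity : (0:ℝ) ≤ (1/9)^n)]
    exact mul_le_mul_of_nonneg_left (w n).2 (by positivity)
  simpa using h0.const_sub u

lemma values (u : ℝ) (hu : |u| ≤ 9/2) : ∃ x y : ℝ, |x - 1| ≤ 1/3 ∧ |y - 1| ≤ 1/3 ∧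
    fd x = 0 ∧ fd y = 0 ∧ f x + 3 * f y = u := by
  obtain ⟨a, b, ha, hb, hab⟩ := expansion u hu
  refine ⟨X a + 1, X b + 1, by simpa using X_le a ha, by simpa using X_le b hb, ?_, ?_, ?_⟩
  · simp [fd, (h_X a ha _).2]
  · simp [fd, (h_X b hb _).2]
  · have h1 := (f_summable (X a + 1)).hasSum
    have h2 := (f_summable (X b + 1)).hasSum.mul_left 3
    have h3 := (h1.add h2).tendsto_sum_nat
    refine tendsto_nhds_unique h3 ?_
    refine hab.congr fun n => ?_
    refine Finset.sum_congr rfl fun k _ => ?_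
    rw [(h_X a ha _).1, (h_X b hb _).1]; ring

noncomputable def F (p : ℝ × ℝ) : ℝ := f p.1 + 3 * f p.2

lemma F_hasFDerivAt (p : ℝ × ℝ) : HasFDerivAt F
    (fd p.1 • ContinuousLinearMap.fst ℝ ℝ ℝ + (3:ℝ) • fd p.2 • ContinuousLinearMap.snd ℝ ℝ ℝ) p := by
  have h1 := (f_hasDerivAt p.1).comp_hasFDerivAt p (hasFDerivAt_fst (𝕜 := ℝ) (p := p))
  have h2 := (f_hasDerivAt p.2).comp_hasFDerivAt p (hasFDerivAt_snd (𝕜 := ℝ) (p := p))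
  exact h1.add (h2.const_mul 3)

lemma M_big : (4/3 : ℝ) ≤ 1 / ((3 : ℝ) ^ ((2 : ℝ) / 3) - 2) := by
  set x := (3 : ℝ) ^ ((2 : ℝ) / 3) with hx
  have hx0 : 0 < x := by positivity
  have hx3 : x^3 = 9 := by
    rw [hx, ← Real.rpow_natCast, ← Real.rpow_mul (by norm_num)]; norm_num
  have h1 : 2 < x := by
    by_contra hc
    push Not at hc
    have := pow_le_pow_left₀ hx0.le hc 3
    rw [hx3] at this; norm_num at this
  have h2 : x < 11/4 := by
    by_contra hc
    push Not at hc
    have := pow_le_pow_left₀ (by norm_num) hc 3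
    rw [hx3] at this; norm_num at this
  rw [le_div_iff₀ (by linarith)]
  linarith

end SardEx

/-- With `M = 1 / (3^{2/3} - 2)`, there is a function `F : ℝ² → ℝ`, continuously
differentiable on `[0, M]²`, whose gradient is `1/2`-Hölder continuous on `[0, M]²`,
such that every `u ∈ [0, 2]` is a critical value of `F`. -/
theorem exists_C1_all_values_critical :
    ∃ (M : ℝ), M = 1 / ((3 : ℝ) ^ ((2 : ℝ) / 3) - 2) ∧
    ∃ F : ℝ × ℝ → ℝ,
      ContDiffOn ℝ 1 F (Set.Icc 0 M ×ˢ Set.Icc 0 M) ∧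
      (∃ K : ℝ, ∀ p ∈ Set.Icc 0 M ×ˢ Set.Icc 0 M, ∀ q ∈ Set.Icc 0 M ×ˢ Set.Icc 0 M,
        ‖fderiv ℝ F p - fderiv ℝ F q‖ ≤ K * ‖p - q‖ ^ ((1 : ℝ) / 2)) ∧
      (∀ u ∈ Set.Icc (0 : ℝ) 2, ∃ p ∈ Set.Icc 0 M ×ˢ Set.Icc 0 M,
        fderiv ℝ F p = 0 ∧ F p = u) := by
  refine ⟨_, rfl, SardEx.F, ?_, ?_, ?_⟩
  · apply ContDiff.contDiffOn
    unfold SardEx.F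
    exact (SardEx.f_contDiff.comp contDiff_fst).add
      (contDiff_const.mul (SardEx.f_contDiff.comp contDiff_snd))
  · obtain ⟨K, hK0, hK⟩ := SardEx.fd_holder
    refine ⟨4 * K, fun p _ q _ => ?_⟩
    rw [(SardEx.F_hasFDerivAt p).fderiv, (SardEx.F_hasFDerivAt q).fderiv, ← Real.sqrt_eq_rpow]
    have hn1 : |p.1 - q.1| ≤ ‖p - q‖ := norm_fst_le (p - q)
    have hn2 : |p.2 - q.2| ≤ ‖p - q‖ := norm_snd_le (p - q)
    have e1 : |SardEx.fd p.1 - SardEx.fd q.1| ≤ K * Real.sqrt ‖p - q‖ :=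
      (hK _ _).trans (mul_le_mul_of_nonneg_left (Real.sqrt_le_sqrt hn1) hK0)
    have e2 : |SardEx.fd p.2 - SardEx.fd q.2| ≤ K * Real.sqrt ‖p - q‖ :=
      (hK _ _).trans (mul_le_mul_of_nonneg_left (Real.sqrt_le_sqrt hn2) hK0)
    refine ContinuousLinearMap.opNorm_le_bound _ (by positivity) fun v => ?_
    have hv1 : |v.1| ≤ ‖v‖ := norm_fst_le v
    have hv2 : |v.2| ≤ ‖v‖ := norm_snd_le v
    have : ((SardEx.fd p.1 • ContinuousLinearMap.fst ℝ ℝ ℝ +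
        (3:ℝ) • SardEx.fd p.2 • ContinuousLinearMap.snd ℝ ℝ ℝ) -
        (SardEx.fd q.1 • ContinuousLinearMap.fst ℝ ℝ ℝ +
        (3:ℝ) • SardEx.fd q.2 • ContinuousLinearMap.snd ℝ ℝ ℝ)) v =
        (SardEx.fd p.1 - SardEx.fd q.1) * v.1 + 3 * ((SardEx.fd p.2 - SardEx.fd q.2) * v.2) := by
      simp; ring
    rw [this, Real.norm_eq_abs]
    have k1 := mul_le_mul e1 hv1 (abs_nonneg _) (by positivity)
    have k2 := mul_le_mul e2 hv2 (abs_nonneg _) (by positivity)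
    rw [← abs_mul] at k1 k2
    refine (abs_add_le _ _).trans ?_
    rw [abs_mul 3, abs_of_pos (by norm_num : (0:ℝ) < 3)]
    linarith
  · intro u hu
    have hM := SardEx.M_big
    obtain ⟨x, y, hx, hy, hfx, hfy, hF⟩ := SardEx.values u
      (by rw [abs_le]; constructor <;> linarith [hu.1, hu.2])
    rw [abs_le] at hx hy
    refine ⟨(x, y), ⟨⟨?_, ?_⟩, ⟨?_, ?_⟩⟩, ?_, hF⟩
    · show 0 ≤ x
      linarith
    · show x ≤ _
      linarith
    · show 0 ≤ y
      linarith
    · show y ≤ _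
      linarith
    · rw [(SardEx.F_hasFDerivAt (x, y)).fderiv]
      simp [hfx, hfy]
end

section
/- There exists a continuously differentiable function F : ℝ² → ℝ such that the set of critical values of F, namely F({p ∈ ℝ² : DF(p) = 0}), has positive Lebesgue measure. In particular, Sard's theorem fails for C¹ functions from ℝ² to ℝ. -/
open MeasureTheory

namespace SardCex

/-- A smooth 1-periodic bump: 0 on `[0,1/6]`, 1 on `[1/3,1/2]`. -/
noncomputable def g (t : ℝ) : ℝ := Real.smoothTransition (1 / 2 - Real.cos (2 * Real.pi * t))

lemma g_contDiff : ContDiff ℝ 1 g := by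
  have h : ContDiff ℝ 1 Real.smoothTransition := Real.smoothTransition.contDiff (n := 1)
  refine h.comp ?_
  fun_prop

lemma g_add_int (t : ℝ) (m : ℤ) : g (t + m) = g t := by
  unfold g
  rw [show 2 * Real.pi * (t + m) = 2 * Real.pi * t + m * (2 * Real.pi) by ring,
    Real.cos_add_int_mul_two_pi]

lemma g_periodic : Function.Periodic g 1 := fun t => by
  simpa using g_add_int t 1

lemma g_nonneg (t : ℝ) : 0 ≤ g t := Real.smoothTransition.nonneg _
lemma g_le_one (t : ℝ) : g t ≤ 1 := Real.smoothTransition.le_one _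

lemma g_eq_zero {t : ℝ} (h0 : 0 ≤ t) (h1 : t ≤ 1 / 6) : g t = 0 := by
  apply Real.smoothTransition.zero_of_nonpos
  have hp := Real.pi_pos
  have := Real.cos_le_cos_of_nonneg_of_le_pi (x := 2 * Real.pi * t) (y := Real.pi / 3)
    (by positivity) (by linarith) (by nlinarith)
  rw [Real.cos_pi_div_three] at this
  linarith

lemma g_eq_one {t : ℝ} (h0 : 1 / 3 ≤ t) (h1 : t ≤ 1 / 2) : g t = 1 := by
  apply Real.smoothTransition.one_of_one_le
  have hp := Real.pi_pos
  have := Real.cos_le_cos_of_nonneg_of_le_pi (x := Real.pi - Real.pi / 3) (y := 2 * Real.pi * t)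
    (by linarith) (by nlinarith) (by nlinarith)
  rw [Real.cos_pi_sub, Real.cos_pi_div_three] at this
  linarith

lemma deriv_g_eq_zero {t : ℝ} (h : g t = 0 ∨ g t = 1) : deriv g t = 0 := by
  rcases h with h | h
  · exact IsLocalMin.deriv_eq_zero (Filter.Eventually.of_forall fun s => by
      rw [h]; exact g_nonneg s)
  · exact IsLocalMax.deriv_eq_zero (Filter.Eventually.of_forall fun s => by
      rw [h]; exact g_le_one s)

lemma deriv_g_bdd : ∃ C : ℝ, ∀ t, ‖deriv g t‖ ≤ C := by
  have hc : Continuous (deriv g) := g_contDiff.continuous_deriv le_rfl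
  have hper : Function.Periodic (deriv g) 1 := fun t => by
    rw [← deriv_comp_add_const]
    congr 1
    funext s
    exact g_periodic s
  obtain ⟨C, hC⟩ := (hper.isBounded_of_continuous one_ne_zero hc).exists_norm_le
  exact ⟨C, fun t => hC _ ⟨t, rfl⟩⟩

/-- The one-variable function. -/
noncomputable def f (x : ℝ) : ℝ := ∑' n : ℕ, (1 / 4 : ℝ) ^ (n + 1) * g (3 ^ n * x)

lemma f_summable (x : ℝ) : Summable fun n : ℕ => (1 / 4 : ℝ) ^ (n + 1) * g (3 ^ n * x) := by
  have hs : Summable fun n : ℕ => (1 / 4 : ℝ) ^ (n + 1) :=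
    (summable_nat_add_iff 1).2 (summable_geometric_of_lt_one (by norm_num) (by norm_num))
  refine Summable.of_nonneg_of_le (fun n => mul_nonneg (by positivity) (g_nonneg _))
    (fun n => ?_) hs
  exact mul_le_of_le_one_right (by positivity) (g_le_one _)

lemma f_main : (∀ x, HasDerivAt f
      (∑' n : ℕ, (1 / 4 : ℝ) ^ (n + 1) * (deriv g (3 ^ n * x) * 3 ^ n)) x) ∧
    Continuous fun x : ℝ => ∑' n : ℕ, (1 / 4 : ℝ) ^ (n + 1) * (deriv g (3 ^ n * x) * 3 ^ n) := by
  obtain ⟨C, hC⟩ := deriv_g_bdd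
  have hu : Summable fun n : ℕ => C / 4 * (3 / 4 : ℝ) ^ n :=
    (summable_geometric_of_lt_one (by norm_num) (by norm_num)).mul_left _
  have hb : ∀ (n : ℕ) (x : ℝ),
      ‖(1 / 4 : ℝ) ^ (n + 1) * (deriv g (3 ^ n * x) * 3 ^ n)‖ ≤ C / 4 * (3 / 4 : ℝ) ^ n := by
    intro n x
    have e : (1 / 4 : ℝ) ^ (n + 1) * (deriv g (3 ^ n * x) * 3 ^ n)
        = deriv g (3 ^ n * x) * ((1 / 4) * (3 / 4 : ℝ) ^ n) := by
      rw [div_pow, div_pow, pow_succ]; field_simp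
      try ring
    rw [e, norm_mul, Real.norm_of_nonneg (by positivity : (0 : ℝ) ≤ (1 / 4) * (3 / 4 : ℝ) ^ n)]
    calc _ ≤ C * ((1 / 4) * (3 / 4 : ℝ) ^ n) := by gcongr; exact hC _
      _ = _ := by ring
  constructor
  · intro x
    refine hasDerivAt_tsum hu (fun n y => ?_) hb (f_summable 0) x
    have h1 : HasDerivAt g (deriv g (3 ^ n * y)) (3 ^ n * y) :=
      (g_contDiff.differentiable one_ne_zero _).hasDerivAt
    have h2 : HasDerivAt (fun y : ℝ => 3 ^ n * y) (3 ^ n) y := by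
      simpa using (hasDerivAt_id y).const_mul ((3 : ℝ) ^ n)
    exact (h1.comp y h2).const_mul _
  · have hc : Continuous (deriv g) := g_contDiff.continuous_deriv le_rfl
    exact continuous_tsum (fun n => by fun_prop) hu hb

lemma f_contDiff : ContDiff ℝ 1 f := by
  rw [contDiff_one_iff_deriv]
  refine ⟨fun x => (f_main.1 x).differentiableAt, ?_⟩
  rw [show deriv f = _ from funext fun x => (f_main.1 x).deriv]
  exact f_main.2

lemma exists_point (d : ℕ → ℝ) (hd : ∀ n, d n = 0 ∨ d n = 1) :
    ∃ x, deriv f x = 0 ∧ HasSum (fun n => (1 / 4 : ℝ) ^ (n + 1) * d n) (f x) := by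
  have d0 : ∀ n, 0 ≤ d n := fun n => by rcases hd n with h | h <;> simp [h]
  have d1 : ∀ n, d n ≤ 1 := fun n => by rcases hd n with h | h <;> simp [h]
  have hg : HasSum (fun k : ℕ => (1 / 3 : ℝ) ^ (k + 1)) (1 / 2) := by
    have := (hasSum_geometric_of_lt_one (r := (1 / 3 : ℝ)) (by norm_num) (by norm_num)).mul_left
      (1 / 3)
    have e : (fun k : ℕ => (1 / 3 : ℝ) ^ (k + 1)) = fun k => 1 / 3 * (1 / 3 : ℝ) ^ k := by
      funext k; ring
    have e' : (1 / 2 : ℝ) = 1 / 3 * (1 - 1 / 3)⁻¹ := by norm_num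
    rw [e, e']
    exact this
  have hs : ∀ n, Summable fun k : ℕ => (1 / 3 : ℝ) ^ (k + 1) * d (n + k) := fun n =>
    Summable.of_nonneg_of_le (fun k => mul_nonneg (by positivity) (d0 _))
      (fun k => mul_le_of_le_one_right (by positivity) (d1 _)) hg.summable
  set T : ℕ → ℝ := fun n => ∑' k : ℕ, (1 / 3 : ℝ) ^ (k + 1) * d (n + k) with hT
  have T0 : ∀ n, 0 ≤ T n := fun n => tsum_nonneg fun k => mul_nonneg (by positivity) (d0 _)
  have T1 : ∀ n, T n ≤ 1 / 2 := fun n => by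
    rw [← hg.tsum_eq]
    exact (hs n).tsum_le_tsum (fun k => mul_le_of_le_one_right (by positivity) (d1 _)) hg.summable
  have Trec : ∀ n, 3 * T n = d n + T (n + 1) := fun n => by
    have h1 : T n = 1 / 3 * d n + 1 / 3 * T (n + 1) := by
      simp only [hT]
      rw [(hs n).tsum_eq_zero_add, ← tsum_mul_left]
      congr 1
      · simp
      · congr 1; funext k
        rw [show n + (k + 1) = n + 1 + k by ring]; ring
    rw [h1]; ring
  have hint : ∀ n, ∃ m : ℤ, 3 ^ n * T 0 = T n + m := by
    intro n
    induction n with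
    | zero => exact ⟨0, by simp⟩
    | succ n ih =>
      obtain ⟨m, hm⟩ := ih
      have hr := Trec n
      rcases hd n with h | h
      · refine ⟨3 * m, ?_⟩
        push_cast; rw [pow_succ, mul_right_comm, hm]; linarith
      · refine ⟨3 * m + 1, ?_⟩
        push_cast; rw [pow_succ, mul_right_comm, hm]; linarith
  have hgd : ∀ n, g (3 ^ n * T 0) = d n := by
    intro n
    obtain ⟨m, hm⟩ := hint n
    rw [hm, g_add_int]
    have hr := Trec n
    have h0 := T0 (n + 1)
    have h1 := T1 (n + 1)
    rcases hd n with h | h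
    · rw [h]; exact g_eq_zero (T0 n) (by linarith)
    · rw [h]; exact g_eq_one (by linarith) (T1 n)
  refine ⟨T 0, ?_, ?_⟩
  · rw [(f_main.1 _).deriv]
    have : ∀ n : ℕ, (1 / 4 : ℝ) ^ (n + 1) * (deriv g (3 ^ n * T 0) * 3 ^ n) = 0 := fun n => by
      rw [deriv_g_eq_zero (by rw [hgd]; exact hd n)]; ring
    simp_rw [this, tsum_zero]
  · have := (f_summable (T 0)).hasSum
    simp_rw [hgd] at this
    convert this using 1
    simp only [f, hgd]

end SardCex

/-- There exists a `C¹` function `F : ℝ² → ℝ` whose set of critical values has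
positive Lebesgue measure: Sard's theorem fails for `C¹` functions `ℝ² → ℝ`. -/
theorem exists_contDiff_one_volume_image_critical_pos :
    ∃ F : ℝ × ℝ → ℝ, ContDiff ℝ 1 F ∧
      0 < volume (F '' {p : ℝ × ℝ | fderiv ℝ F p = 0}) := by
  have hf := SardCex.f_contDiff
  refine ⟨fun p => SardCex.f p.1 + 2 * SardCex.f p.2, by fun_prop, ?_⟩
  have hsub : Set.Ico (0 : ℝ) 1 ⊆ (fun p : ℝ × ℝ => SardCex.f p.1 + 2 * SardCex.f p.2) ''
      {p : ℝ × ℝ | fderiv ℝ (fun p : ℝ × ℝ => SardCex.f p.1 + 2 * SardCex.f p.2) p = 0} := by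
    intro z hz
    have hz' := Real.hasSum_ofDigitsTerm_digits z (b := 4) (by norm_num) hz
    set q := Real.digits z 4
    obtain ⟨x, hx, hxs⟩ := SardCex.exists_point (fun n => (((q n : ℕ) % 2 : ℕ) : ℝ)) (fun n => by
      rcases Nat.mod_two_eq_zero_or_one (q n : ℕ) with h | h <;> simp [h])
    obtain ⟨y, hy, hys⟩ := SardCex.exists_point (fun n => (((q n : ℕ) / 2 : ℕ) : ℝ)) (fun n => by
      have h4 : (q n : ℕ) < 4 := (q n).2
      have : (q n : ℕ) / 2 = 0 ∨ (q n : ℕ) / 2 = 1 := by omega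
      rcases this with h | h <;> simp only [h] <;> simp)
    refine ⟨(x, y), ?_, ?_⟩
    · have hd := hf.differentiable one_ne_zero
      have h1 : HasDerivAt SardCex.f 0 x := hx ▸ (hd x).hasDerivAt
      have h2 : HasDerivAt SardCex.f 0 y := hy ▸ (hd y).hasDerivAt
      have e1 : HasFDerivAt (fun p : ℝ × ℝ => SardCex.f p.1)
          ((0 : ℝ) • ContinuousLinearMap.fst ℝ ℝ ℝ) (x, y) :=
        HasDerivAt.comp_hasFDerivAt (h₂ := SardCex.f) (f := fun p : ℝ × ℝ => p.1) (x, y) h1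
          (hasFDerivAt_fst (𝕜 := ℝ) (p := ((x, y) : ℝ × ℝ)))
      have e2 : HasFDerivAt (fun p : ℝ × ℝ => SardCex.f p.2)
          ((0 : ℝ) • ContinuousLinearMap.snd ℝ ℝ ℝ) (x, y) :=
        HasDerivAt.comp_hasFDerivAt (h₂ := SardCex.f) (f := fun p : ℝ × ℝ => p.2) (x, y) h2
          (hasFDerivAt_snd (𝕜 := ℝ) (p := ((x, y) : ℝ × ℝ)))
      have e3 := e1.add (e2.const_mul 2)
      refine Eq.trans e3.fderiv ?_
      ext <;> simp
    · refine (hxs.add (hys.mul_left 2)).unique ?_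
      convert hz' using 1
      funext n
      have : ((q n : ℕ) : ℝ) = (((q n : ℕ) % 2 : ℕ) : ℝ) + 2 * (((q n : ℕ) / 2 : ℕ) : ℝ) := by
        exact_mod_cast (Nat.mod_add_div (q n : ℕ) 2).symm
      rw [Real.ofDigitsTerm, this]
      push_cast
      rw [div_pow, one_pow]
      ring
  refine lt_of_lt_of_le ?_ (measure_mono hsub)
  simp
end

section
/- For every α with 0 < α < log(3/2)/log 2, there exists a function F : ℝ² → ℝ that is continuously differentiable on [0, M_α]² (where M_α = 1/(3^{1/(1+α)} − 2)), whose gradient is α-Hölder continuous on [0, M_α]², and such that every u ∈ [0, 2] is a critical value of F: there exists a point p ∈ [0, M_α]² with ∇F(p) = (0, 0) and F(p) = u. -/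
open Metric in
lemma abs_rpow_sub_rpow_le_aux {α a b : ℝ} (h0 : 0 < α) (h1 : α ≤ 1) (ha : 0 ≤ a) (hb : 0 ≤ b) :
    |a ^ α - b ^ α| ≤ |a - b| ^ α := by
  wlog hab : b ≤ a generalizing a b
  · rw [abs_sub_comm, abs_sub_comm a b]
    exact this hb ha (le_of_not_ge hab)
  rw [abs_of_nonneg (sub_nonneg.2 hab),
    abs_of_nonneg (sub_nonneg.2 (Real.rpow_le_rpow hb hab h0.le))]
  have := Real.rpow_add_le_add_rpow (sub_nonneg.2 hab) hb h0.le h1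
  rw [sub_add_cancel] at this
  linarith

/-- Sum of the digit series `∑ dᵢ ρ ^ i`. -/
noncomputable def digSum (ρ : ℝ) (d : ℕ → Bool) : ℝ := ∑' i, (if d i then (1 : ℝ) else 0) * ρ ^ i

lemma digSum_summable {ρ : ℝ} (h0 : 0 ≤ ρ) (h1 : ρ < 1) (d : ℕ → Bool) :
    Summable fun i => (if d i then (1 : ℝ) else 0) * ρ ^ i := by
  refine Summable.of_nonneg_of_le (fun i => by positivity) (fun i => ?_)
    (summable_geometric_of_lt_one h0 h1)
  have : 0 ≤ ρ ^ i := by positivity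
  split_ifs <;> simp [this]

lemma digSum_cons {ρ : ℝ} (h0 : 0 ≤ ρ) (h1 : ρ < 1) (d : ℕ → Bool) :
    digSum ρ d = (if d 0 then (1 : ℝ) else 0) + ρ * digSum ρ (fun i => d (i + 1)) := by
  unfold digSum
  rw [(digSum_summable h0 h1 d).tsum_eq_zero_add, ← tsum_mul_left]
  simp only [pow_zero, mul_one]
  congr 1
  refine tsum_congr fun i => ?_
  ring

lemma digSum_nonneg {ρ : ℝ} (h0 : 0 ≤ ρ) (d : ℕ → Bool) : 0 ≤ digSum ρ d :=
  tsum_nonneg fun i => by positivity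

lemma digSum_true {ρ : ℝ} (h0 : 0 ≤ ρ) (h1 : ρ < 1) : (1 - ρ) * digSum ρ (fun _ => true) = 1 := by
  have := digSum_cons h0 h1 (fun _ => true)
  simp only [if_true] at this
  linarith

lemma digSum_le {ρ : ℝ} (h0 : 0 ≤ ρ) (h1 : ρ < 1) (d : ℕ → Bool) : (1 - ρ) * digSum ρ d ≤ 1 := by
  refine le_of_le_of_eq (mul_le_mul_of_nonneg_left ?_ (by linarith)) (digSum_true h0 h1)
  refine (digSum_summable h0 h1 d).tsum_le_tsum (fun i => ?_) (digSum_summable h0 h1 _)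
  have : 0 ≤ ρ ^ i := by positivity
  split_ifs <;> simp_all

lemma exists_digits (u : ℝ) (hu : u ∈ Set.Icc (0 : ℝ) 2) :
    ∃ d e : ℕ → Bool, 2 / 3 * digSum (1 / 3) d + 2 / 3 * digSum (1 / 3) e = u := by
  obtain ⟨a, -, ha⟩ := Real.ofDigits_SurjOn (b := 3) (by norm_num)
    (show u / 2 ∈ Set.Icc (0 : ℝ) 1 from ⟨by linarith [hu.1], by linarith [hu.2]⟩)
  refine ⟨fun i => decide (1 ≤ (a i).val), fun i => decide (2 ≤ (a i).val), ?_⟩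
  unfold digSum
  rw [← mul_add, ← Summable.tsum_add (digSum_summable (by norm_num) (by norm_num) _)
    (digSum_summable (by norm_num) (by norm_num) _)]
  have : u = 2 * (u / 2) := by ring
  rw [this, ← ha, Real.ofDigits, ← tsum_mul_left, ← tsum_mul_left]
  refine tsum_congr fun i => ?_
  unfold Real.ofDigitsTerm
  generalize a i = c
  rw [pow_succ]
  fin_cases c <;> simp <;> ring

/-- One-dimensional function. -/
lemma exists_one_dim (α r M : ℝ) (h0 : 0 < α) (h1 : α ≤ 1) (hr0 : 0 < r) (hr : r < 1 / 2)
    (hM : 0 < M) (hrα : r ^ α * r = 1 / 3) :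
    ∃ (f g : ℝ → ℝ) (C : ℝ), (∀ x, HasDerivAt f (g x) x) ∧ Continuous g ∧ 0 ≤ C ∧
      (∀ x y, |g x - g y| ≤ C * |x - y| ^ α) ∧
      ∀ d, ∃ x ∈ Set.Icc 0 M, g x = 0 ∧ f x = 2 / 3 * digSum (1 / 3) d := by
  have hr1 : r < 1 := by linarith
  set φ : (ℕ → Bool) → ℝ := fun d => (1 - r) * M * digSum r d with hφ
  set K := Set.range φ with hK
  have hφ01 : ∀ d, φ d ∈ Set.Icc 0 M := fun d => by
    have a1 := digSum_nonneg hr0.le d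
    have a2 := digSum_le hr0.le hr1 d
    have : 0 ≤ 1 - r := by linarith
    refine ⟨by positivity, ?_⟩
    have := mul_le_mul_of_nonneg_left a2 hM.le
    simp only [hφ]; linarith
  have hcons : ∀ d, φ d = (if d 0 then (1 - r) * M else 0) + r * φ (fun i => d (i + 1)) := by
    intro d
    simp only [hφ]
    rw [digSum_cons hr0.le hr1 d]
    split_ifs <;> ring
  have hKne : K.Nonempty := Set.range_nonempty _
  have hMK : M ∈ K := ⟨fun _ => true, by
    simp only [hφ]; linear_combination M * digSum_true hr0.le hr1⟩
  have h0K : 0 ∈ K := ⟨fun _ => false, by simp [hφ, digSum]⟩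
  have hKL : ∀ x ∈ K, r * x ∈ K := by
    rintro _ ⟨d, rfl⟩
    refine ⟨fun i => Nat.casesOn i false d, ?_⟩
    rw [hcons]; simp
  have hKR : ∀ x ∈ K, (1 - r) * M + r * x ∈ K := by
    rintro _ ⟨d, rfl⟩
    refine ⟨fun i => Nat.casesOn i true d, ?_⟩
    rw [hcons]; simp
  have hKI : ∀ x ∈ K, 0 ≤ x ∧ x ≤ M := by
    rintro _ ⟨d, rfl⟩; exact hφ01 d
  have hKS : ∀ y ∈ K, ∃ x ∈ K, y = r * x ∨ y = (1 - r) * M + r * x := by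
    rintro _ ⟨d, rfl⟩
    refine ⟨_, ⟨fun i => d (i + 1), rfl⟩, ?_⟩
    rw [hcons d]
    split_ifs <;> simp
  set δ : ℝ → ℝ := fun x => Metric.infDist x K with hδ
  have hδ0 : ∀ x, 0 ≤ δ x := fun x => Metric.infDist_nonneg
  have hδle : ∀ x, ∀ y ∈ K, δ x ≤ |x - y| := fun x y hy => Metric.infDist_le_dist_of_mem hy
  have leδ : ∀ x c, (∀ y ∈ K, c ≤ |x - y|) → c ≤ δ x := fun x c h =>
    (Metric.le_infDist hKne).2 fun {y} hy => h y hy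
  have hscale : ∀ x y c : ℝ, |(c + r * x) - (c + r * y)| = r * |x - y| := by
    intro x y c
    rw [← abs_of_pos hr0, ← abs_mul, abs_of_pos hr0]; congr 1; ring
  have hδL : ∀ x ∈ Set.Icc 0 M, δ (0 + r * x) = r * δ x := by
    intro x hx
    apply le_antisymm
    · rw [← div_le_iff₀' hr0]
      refine leδ _ _ fun y hy => ?_
      rw [div_le_iff₀' hr0, ← hscale x y 0]
      exact hδle _ _ (by simpa using hKL y hy)
    · refine leδ _ _ fun y hy => ?_
      obtain ⟨z, hz, rfl | rfl⟩ := hKS y hy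
      · have := hscale x z 0
        rw [zero_add (r * z)] at this
        rw [this]
        exact mul_le_mul_of_nonneg_left (hδle x z hz) hr0.le
      · have := mul_le_mul_of_nonneg_left (hδle x M hMK) hr0.le
        rw [abs_sub_comm, abs_of_nonneg (by linarith [hx.2] : 0 ≤ M - x)] at this
        have h2 := mul_nonneg hr0.le (hKI z hz).1
        rw [abs_sub_comm]
        refine le_trans ?_ (le_abs_self _)
        nlinarith
  have hδR : ∀ x ∈ Set.Icc 0 M, δ ((1 - r) * M + r * x) = r * δ x := by
    intro x hx
    apply le_antisymm
    · rw [← div_le_iff₀' hr0]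
      refine leδ _ _ fun y hy => ?_
      rw [div_le_iff₀' hr0, ← hscale x y ((1 - r) * M)]
      exact hδle _ _ (hKR y hy)
    · refine leδ _ _ fun y hy => ?_
      obtain ⟨z, hz, rfl | rfl⟩ := hKS y hy
      · have := mul_le_mul_of_nonneg_left (hδle x 0 h0K) hr0.le
        rw [sub_zero, abs_of_nonneg hx.1] at this
        have h2 := mul_le_mul_of_nonneg_left (hKI z hz).2 hr0.le
        refine le_trans ?_ (le_abs_self _)
        nlinarith
      · rw [hscale]
        exact mul_le_mul_of_nonneg_left (hδle x z hz) hr0.le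
  have hδlip : ∀ x y, |δ x - δ y| ≤ |x - y| := fun x y => by
    have := (Metric.lipschitz_infDist_pt K).dist_le_mul x y
    simpa [Real.dist_eq] using this
  set g : ℝ → ℝ := fun x => δ x ^ α with hg
  have hδc : Continuous δ := Metric.continuous_infDist_pt K
  have hgc : Continuous g := hδc.rpow_const fun _ => Or.inr h0.le
  have hgh : ∀ x y, |g x - g y| ≤ |x - y| ^ α := fun x y =>
    (abs_rpow_sub_rpow_le_aux h0 h1 (hδ0 x) (hδ0 y)).trans
      (Real.rpow_le_rpow (abs_nonneg _) (hδlip x y) h0.le)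
  have hg0 : ∀ x ∈ K, g x = 0 := fun x hx => by
    simp only [hg, hδ, Metric.infDist_zero_of_mem hx, Real.zero_rpow h0.ne']
  have hgnn : ∀ x, 0 ≤ g x := fun x => Real.rpow_nonneg (hδ0 x) _
  set G : ℝ → ℝ := fun x => ∫ t in (0 : ℝ)..x, g t with hG
  have hGi : ∀ a b, IntervalIntegrable g MeasureTheory.volume a b := fun a b =>
    hgc.intervalIntegrable a b
  have hGd : ∀ x, HasDerivAt G (g x) x := fun x =>
    intervalIntegral.integral_hasDerivAt_right (hGi _ _)
      hgc.stronglyMeasurable.stronglyMeasurableAtFilter hgc.continuousAt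
  have hscaleG : ∀ c, (∀ x ∈ Set.Icc 0 M, δ (c + r * x) = r * δ x) →
      ∀ x ∈ Set.Icc 0 M, G (c + r * x) = G c + G x / 3 := by
    intro c hc x hx
    have e1 : G (c + r * x) = G c + ∫ t in c..(c + r * x), g t :=
      (intervalIntegral.integral_add_adjacent_intervals (hGi _ _) (hGi _ _)).symm
    have e2 := intervalIntegral.smul_integral_comp_add_mul (a := 0) (b := x) g r c
    have e3 : ∫ t in (0 : ℝ)..x, g (c + r * t) = ∫ t in (0 : ℝ)..x, r ^ α * g t := by
      refine intervalIntegral.integral_congr fun t ht => ?_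
      rw [Set.uIcc_of_le hx.1] at ht
      simp only [hg]
      rw [hc t ⟨ht.1, ht.2.trans hx.2⟩, Real.mul_rpow hr0.le (hδ0 t)]
    rw [e3, intervalIntegral.integral_const_mul, mul_zero, add_zero, smul_eq_mul] at e2
    rw [e1, ← e2]
    simp only [hG]
    linear_combination (∫ t in (0 : ℝ)..x, g t) * hrα
  have hG00 : G 0 = 0 := by simp [hG]
  have hGL : ∀ x ∈ Set.Icc 0 M, G (r * x) = G x / 3 := fun x hx => by
    have := hscaleG 0 hδL x hx
    simpa [hG00] using this
  have hGR := hscaleG _ hδR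
  have hmid : 0 < δ (M / 2) := by
    refine lt_of_lt_of_le (b := (1 / 2 - r) * M) (mul_pos (by linarith) hM) (leδ _ _ fun y hy => ?_)
    obtain ⟨z, hz, rfl | rfl⟩ := hKS y hy
    · have h2 := mul_le_mul_of_nonneg_left (hKI z hz).2 hr0.le
      refine le_trans ?_ (le_abs_self _)
      nlinarith
    · have h2 := mul_nonneg hr0.le (hKI z hz).1
      rw [abs_sub_comm]
      refine le_trans ?_ (le_abs_self _)
      nlinarith
  have hGM : 0 < G M := intervalIntegral.integral_pos hM hgc.continuousOn (fun x _ => hgnn x)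
    ⟨M / 2, ⟨by linarith, by linarith⟩, Real.rpow_pos_of_pos hmid _⟩
  have hGb : G ((1 - r) * M) = 2 / 3 * G M := by
    have := hGR M ⟨hM.le, le_rfl⟩
    rw [show (1 - r) * M + r * M = M by ring] at this
    linarith
  have hval : ∀ d, G (φ d) = G M * (2 / 3 * digSum (1 / 3) d) := by
    have hstep : ∀ d, G (φ d) - G M * (2 / 3 * digSum (1 / 3) d) =
        (G (φ fun i => d (i + 1)) - G M * (2 / 3 * digSum (1 / 3) fun i => d (i + 1))) / 3 := by
      intro d
      rw [hcons d, digSum_cons (by norm_num) (by norm_num) d]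
      split_ifs
      · rw [hGR _ (hφ01 _), hGb]; ring
      · rw [zero_add, hGL _ (hφ01 _)]; ring
    obtain ⟨B, hB⟩ : ∃ B, ∀ d, |G (φ d) - G M * (2 / 3 * digSum (1 / 3) d)| ≤ B := by
      have hGcont : Continuous G := continuous_iff_continuousAt.2 fun x => (hGd x).continuousAt
      obtain ⟨B, hB⟩ := (isCompact_Icc (a := (0 : ℝ)) (b := M)).exists_bound_of_continuousOn
        hGcont.continuousOn
      refine ⟨B + G M, fun d => ?_⟩
      refine (abs_sub _ _).trans (add_le_add (hB _ (hφ01 d)) ?_)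
      have a1 := digSum_nonneg (ρ := 1 / 3) (by norm_num) d
      have a2 := digSum_le (ρ := 1 / 3) (by norm_num) (by norm_num) d
      rw [abs_of_nonneg (by positivity)]
      nlinarith
    have hn : ∀ n : ℕ, ∀ d, |G (φ d) - G M * (2 / 3 * digSum (1 / 3) d)| ≤ B * (1 / 3) ^ n := by
      intro n
      induction n with
      | zero => simpa using hB
      | succ n ih =>
        intro d
        rw [hstep, abs_div, abs_of_pos (by norm_num : (0 : ℝ) < 3), pow_succ]
        have := ih fun i => d (i + 1)
        linarith
    intro d
    have hlim : Filter.Tendsto (fun n : ℕ => B * (1 / 3 : ℝ) ^ n) Filter.atTop (nhds (B * 0)) :=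
      (tendsto_pow_atTop_nhds_zero_of_lt_one (by norm_num) (by norm_num)).const_mul B
    have := ge_of_tendsto' hlim fun n => hn n d
    rw [mul_zero] at this
    exact sub_eq_zero.1 (abs_eq_zero.1 (le_antisymm this (abs_nonneg _)))
  refine ⟨fun x => (G M)⁻¹ * G x, fun x => (G M)⁻¹ * g x, (G M)⁻¹, fun x => (hGd x).const_mul _,
    hgc.const_mul _, by positivity, fun x y => ?_, fun d => ⟨φ d, hφ01 d, ?_, ?_⟩⟩
  · rw [← mul_sub, abs_mul, abs_of_pos (inv_pos.2 hGM)]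
    exact mul_le_mul_of_nonneg_left (hgh x y) (by positivity)
  · simp [hg0 _ ⟨d, rfl⟩]
  · simp only [hval]
    field_simp

/-- For every `0 < α < log(3/2)/log 2`, with `M_α = 1/(3^{1/(1+α)} - 2)`, there is a
function `F : ℝ² → ℝ`, continuously differentiable on `[0, M_α]²`, whose gradient is
`α`-Hölder continuous on `[0, M_α]²`, such that every `u ∈ [0, 2]` is a critical
value of `F`. -/
theorem exists_C1_alpha_holder_all_values_critical (α : ℝ) (hα0 : 0 < α)
    (hα : α < Real.log (3 / 2) / Real.log 2) :
    ∃ (M : ℝ), M = 1 / ((3 : ℝ) ^ (1 / (1 + α)) - 2) ∧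
    ∃ F : ℝ × ℝ → ℝ,
      ContDiffOn ℝ 1 F (Set.Icc 0 M ×ˢ Set.Icc 0 M) ∧
      (∃ K : ℝ, ∀ p ∈ Set.Icc 0 M ×ˢ Set.Icc 0 M, ∀ q ∈ Set.Icc 0 M ×ˢ Set.Icc 0 M,
        ‖fderiv ℝ F p - fderiv ℝ F q‖ ≤ K * ‖p - q‖ ^ α) ∧
      (∀ u ∈ Set.Icc (0 : ℝ) 2, ∃ p ∈ Set.Icc 0 M ×ˢ Set.Icc 0 M,
        fderiv ℝ F p = 0 ∧ F p = u) := by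
  have hl2 : 0 < Real.log 2 := Real.log_pos (by norm_num)
  have hlog : Real.log 3 = Real.log (3 / 2) + Real.log 2 := by
    rw [← Real.log_mul (by norm_num) (by norm_num)]; norm_num
  rw [lt_div_iff₀ hl2] at hα
  have h1 : α ≤ 1 := by
    have : Real.log (3 / 2) ≤ Real.log 2 := Real.log_le_log (by norm_num) (by norm_num)
    by_contra h
    push Not at h
    nlinarith
  have hs : (2 : ℝ) < 3 ^ (1 / (1 + α)) := by
    rw [← Real.log_lt_log_iff (by norm_num) (by positivity), Real.log_rpow (by norm_num),
      one_div, inv_mul_eq_div, lt_div_iff₀ (by linarith)]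
    linarith
  set s : ℝ := (3 : ℝ) ^ (1 / (1 + α)) with hsd
  have hs3 : s ^ α * s = 3 := by
    have hs0 : 0 < s := by linarith
    rw [← Real.rpow_add_one hs0.ne', hsd, ← Real.rpow_mul (by norm_num)]
    rw [show 1 / (1 + α) * (α + 1) = 1 by field_simp; ring, Real.rpow_one]
  have hs0 : 0 < s := by linarith
  refine ⟨_, rfl, ?_⟩
  have hM : 0 < 1 / (s - 2) := by
    have : 0 < s - 2 := by linarith
    positivity
  set M := 1 / (s - 2)
  obtain ⟨f, g, C, hf, hg, hC, hgh, hv⟩ := exists_one_dim α s⁻¹ M hα0 h1 (by positivity)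
    (by rw [one_div]; exact (inv_lt_inv₀ hs0 (by norm_num)).2 hs) hM
    (by rw [Real.inv_rpow hs0.le, ← mul_inv, hs3, one_div])
  have hF : ∀ p : ℝ × ℝ, HasFDerivAt (fun p : ℝ × ℝ => f p.1 + f p.2)
      (g p.1 • ContinuousLinearMap.fst ℝ ℝ ℝ + g p.2 • ContinuousLinearMap.snd ℝ ℝ ℝ) p := by
    intro p
    exact ((hf p.1).comp_hasFDerivAt p hasFDerivAt_fst).add
      ((hf p.2).comp_hasFDerivAt p hasFDerivAt_snd)
  refine ⟨fun p => f p.1 + f p.2, ?_, ⟨2 * C, ?_⟩, ?_⟩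
  · refine ContDiff.contDiffOn (contDiff_one_iff_hasFDerivAt.2 ⟨_, ?_, hF⟩)
    fun_prop
  · intro p _ q _
    rw [(hF p).fderiv, (hF q).fderiv]
    have e : (g p.1 • ContinuousLinearMap.fst ℝ ℝ ℝ + g p.2 • ContinuousLinearMap.snd ℝ ℝ ℝ) -
        (g q.1 • ContinuousLinearMap.fst ℝ ℝ ℝ + g q.2 • ContinuousLinearMap.snd ℝ ℝ ℝ) =
        (g p.1 - g q.1) • ContinuousLinearMap.fst ℝ ℝ ℝ +
        (g p.2 - g q.2) • ContinuousLinearMap.snd ℝ ℝ ℝ := by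
      module
    rw [e]
    have n1 : |p.1 - q.1| ≤ ‖p - q‖ := norm_fst_le (p - q)
    have n2 : |p.2 - q.2| ≤ ‖p - q‖ := norm_snd_le (p - q)
    have b1 : |g p.1 - g q.1| ≤ C * ‖p - q‖ ^ α := (hgh _ _).trans
      (mul_le_mul_of_nonneg_left (Real.rpow_le_rpow (abs_nonneg _) n1 hα0.le) hC)
    have b2 : |g p.2 - g q.2| ≤ C * ‖p - q‖ ^ α := (hgh _ _).trans
      (mul_le_mul_of_nonneg_left (Real.rpow_le_rpow (abs_nonneg _) n2 hα0.le) hC)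
    refine (norm_add_le _ _).trans ?_
    rw [norm_smul, norm_smul, Real.norm_eq_abs, Real.norm_eq_abs]
    have f1 := ContinuousLinearMap.norm_fst_le ℝ ℝ ℝ
    have f2 := ContinuousLinearMap.norm_snd_le ℝ ℝ ℝ
    have c1 := mul_le_of_le_one_right (abs_nonneg (g p.1 - g q.1)) f1
    have c2 := mul_le_of_le_one_right (abs_nonneg (g p.2 - g q.2)) f2
    linarith
  · intro u hu
    obtain ⟨d, e, hde⟩ := exists_digits u hu
    obtain ⟨x, hx, gx, fx⟩ := hv d
    obtain ⟨y, hy, gy, fy⟩ := hv e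
    refine ⟨(x, y), ⟨hx, hy⟩, ?_, ?_⟩
    · rw [(hF _).fderiv]; simp [gx, gy]
    · simp only [fx, fy, hde]
end

section
/- For every α with 0 < α < log(3/2)/log 2, setting M_α = 1/(3^{1/(1+α)} − 2), there exists a strictly increasing, continuously differentiable function f : [0, M_α] → [0, 1] whose derivative is α-Hölder continuous, such that f(0) = 0, f(M_α) = 1, the zero set A = {x ∈ [0, M_α] : f′(x) = 0} has Lebesgue measure zero, and f(A) equals the Cantor ternary set C. -/
open MeasureTheory

/-- Parametrisation of the central Cantor set of ratio `r`. -/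
noncomputable def kmap (r d : ℝ) (a : ℕ → Bool) : ℝ := ∑' n, (if a n then d * r ^ n else 0)

section aux
variable {r d M : ℝ}

lemma kmap_term_nonneg (hr : 0 < r) (hd : 0 < d) (a : ℕ → Bool) (n : ℕ) :
    0 ≤ (if a n then d * r ^ n else 0) := by
  split_ifs <;> positivity

lemma kmap_term_le (hr : 0 < r) (hd : 0 < d) (a : ℕ → Bool) (n : ℕ) :
    (if a n then d * r ^ n else 0) ≤ d * r ^ n := by
  have : 0 ≤ d * r ^ n := by positivity
  split_ifs <;> simp [this]

lemma kmap_geom (hr : 0 < r) (h2 : 2 * r < 1) : Summable (fun n : ℕ => d * r ^ n) :=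
  (summable_geometric_of_lt_one hr.le (by linarith)).mul_left d

lemma kmap_summable (hr : 0 < r) (h2 : 2 * r < 1) (hd : 0 < d) (a : ℕ → Bool) :
    Summable (fun n : ℕ => if a n then d * r ^ n else 0) :=
  Summable.of_nonneg_of_le (kmap_term_nonneg hr hd a) (kmap_term_le hr hd a) (kmap_geom hr h2)

lemma kmap_true (hr : 0 < r) (h2 : 2 * r < 1) (hM : d = (1 - r) * M) :
    kmap r d (fun _ => true) = M := by
  have h : (1 - r) ≠ 0 := by linarith
  simp only [kmap, if_true, tsum_mul_left, tsum_geometric_of_lt_one hr.le (by linarith : r < 1), hM]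
  field_simp

lemma kmap_false : kmap r d (fun _ => false) = 0 := by simp [kmap]

lemma kmap_nonneg (hr : 0 < r) (hd : 0 < d) (a : ℕ → Bool) :
    0 ≤ kmap r d a := tsum_nonneg (kmap_term_nonneg hr hd a)

lemma kmap_le (hr : 0 < r) (h2 : 2 * r < 1) (hd : 0 < d) (hM : d = (1 - r) * M) (a : ℕ → Bool) :
    kmap r d a ≤ M := by
  rw [← kmap_true hr h2 hM]
  refine Summable.tsum_le_tsum (fun n => ?_) (kmap_summable hr h2 hd a)
    (kmap_summable hr h2 hd _)
  simpa using kmap_term_le hr hd a n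

lemma kmap_shift (hr : 0 < r) (h2 : 2 * r < 1) (hd : 0 < d) (a : ℕ → Bool) :
    kmap r d a = (if a 0 then d else 0) + r * kmap r d (fun n => a (n + 1)) := by
  unfold kmap
  rw [(kmap_summable hr h2 hd a).tsum_eq_zero_add, ← tsum_mul_left]
  congr 1
  · simp
  · congr 1
    ext n
    split_ifs
    · ring
    · simp

lemma kmap_continuous (hr : 0 < r) (h2 : 2 * r < 1) (hd : 0 < d) : Continuous (kmap r d) := by
  unfold kmap
  refine continuous_tsum (u := fun n => d * r ^ n) (fun n => ?_) (kmap_geom hr h2) (fun n a => ?_)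
  · exact (continuous_of_discreteTopology (f := fun b : Bool => if b then d * r ^ n else 0)).comp
      (continuous_apply n)
  · rw [Real.norm_of_nonneg (kmap_term_nonneg hr hd a n)]
    exact kmap_term_le hr hd a n

/-- central Cantor set -/
def KK (r d : ℝ) : Set ℝ := Set.range (kmap r d)

lemma KK_compact (hr : 0 < r) (h2 : 2 * r < 1) (hd : 0 < d) : IsCompact (KK r d) :=
  isCompact_range (kmap_continuous hr h2 hd)

lemma KK_nonempty : (KK r d).Nonempty := Set.range_nonempty _

lemma KK_left (hr : 0 < r) (h2 : 2 * r < 1) (hd : 0 < d) {y : ℝ} (hy : y ∈ KK r d) :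
    r * y ∈ KK r d := by
  obtain ⟨a, rfl⟩ := hy
  refine ⟨fun n => Nat.casesOn n false a, ?_⟩
  rw [kmap_shift hr h2 hd]
  simp

lemma KK_right (hr : 0 < r) (h2 : 2 * r < 1) (hd : 0 < d) {y : ℝ} (hy : y ∈ KK r d) :
    d + r * y ∈ KK r d := by
  obtain ⟨a, rfl⟩ := hy
  refine ⟨fun n => Nat.casesOn n true a, ?_⟩
  rw [kmap_shift hr h2 hd]
  simp

lemma KK_cases (hr : 0 < r) (h2 : 2 * r < 1) (hd : 0 < d) {y : ℝ} (hy : y ∈ KK r d) :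
    ∃ z ∈ KK r d, y = r * z ∨ y = d + r * z := by
  obtain ⟨a, rfl⟩ := hy
  refine ⟨_, ⟨fun n => a (n + 1), rfl⟩, ?_⟩
  rw [kmap_shift hr h2 hd a]
  cases a 0 <;> simp

lemma KK_sub (hr : 0 < r) (h2 : 2 * r < 1) (hd : 0 < d) (hM : d = (1 - r) * M) :
    KK r d ⊆ Set.Icc 0 M := by
  rintro _ ⟨a, rfl⟩
  exact ⟨kmap_nonneg hr hd a, kmap_le hr h2 hd hM a⟩

open scoped Pointwise in
lemma KK_null (hr : 0 < r) (h2 : 2 * r < 1) (hd : 0 < d) : volume (KK r d) = 0 := by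
  have hfin : volume (KK r d) ≠ ⊤ := (KK_compact hr h2 hd).measure_lt_top.ne
  have hsub : KK r d ⊆ (r • KK r d) ∪ ((fun x => d + x) '' (r • KK r d)) := by
    intro y hy
    obtain ⟨z, hz, h | h⟩ := KK_cases hr h2 hd hy
    · left; exact ⟨z, hz, h.symm⟩
    · right; exact ⟨r * z, ⟨z, hz, rfl⟩, h.symm⟩
  have h1 : volume (r • KK r d) = ENNReal.ofReal r * volume (KK r d) := by
    rw [Measure.addHaar_smul]; simp [abs_of_pos hr]
  have h3 : volume ((fun x => d + x) '' (r • KK r d)) = volume (r • KK r d) := by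
    rw [Set.image_add_left]; exact measure_preimage_add _ _ _
  have h4 := (measure_mono hsub).trans (measure_union_le (μ := volume) _ _)
  rw [h3, h1] at h4
  have h5 := ENNReal.toReal_mono (by finiteness) h4
  rw [ENNReal.toReal_add (by finiteness) (by finiteness), ENNReal.toReal_mul,
    ENNReal.toReal_ofReal hr.le] at h5
  have h6 : 0 ≤ (volume (KK r d)).toReal := ENNReal.toReal_nonneg
  have h7 : (volume (KK r d)).toReal = 0 := by nlinarith
  exact ((ENNReal.toReal_eq_zero_iff _).1 h7).resolve_right hfin

lemma infDist_left (hr : 0 < r) (h2 : 2 * r < 1) (hd : 0 < d) (hM : d = (1 - r) * M)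
    {x : ℝ} (hx : x ∈ Set.Icc 0 M) :
    Metric.infDist (r * x) (KK r d) = r * Metric.infDist x (KK r d) := by
  have hMK : M ∈ KK r d := ⟨_, kmap_true hr h2 hM⟩
  have hs : ∀ z, dist (r * x) (r * z) = r * dist x z := fun z => by
    rw [Real.dist_eq, Real.dist_eq, ← mul_sub, abs_mul, abs_of_pos hr]
  apply le_antisymm
  · rw [← div_le_iff₀' hr]
    refine (Metric.le_infDist KK_nonempty).2 fun z hz => ?_
    rw [div_le_iff₀' hr, ← hs]
    exact Metric.infDist_le_dist_of_mem (KK_left hr h2 hd hz)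
  · refine (Metric.le_infDist KK_nonempty).2 fun y hy => ?_
    obtain ⟨z, hz, rfl | rfl⟩ := KK_cases hr h2 hd hy
    · rw [hs]
      exact mul_le_mul_of_nonneg_left (Metric.infDist_le_dist_of_mem hz) hr.le
    · refine (mul_le_mul_of_nonneg_left (Metric.infDist_le_dist_of_mem hMK) hr.le).trans ?_
      have hz0 := (KK_sub hr h2 hd hM hz).1
      have hM0 : 0 ≤ M := hx.1.trans hx.2
      rw [dist_comm x, dist_comm (r * x), Real.dist_eq, Real.dist_eq,
        abs_of_nonneg (by linarith [hx.2])]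
      refine le_trans ?_ (le_abs_self _)
      nlinarith [mul_nonneg hr.le hz0]

lemma infDist_right (hr : 0 < r) (h2 : 2 * r < 1) (hd : 0 < d) (hM : d = (1 - r) * M)
    {x : ℝ} (hx : x ∈ Set.Icc 0 M) :
    Metric.infDist (d + r * x) (KK r d) = r * Metric.infDist x (KK r d) := by
  have hMK : (0 : ℝ) ∈ KK r d := ⟨_, kmap_false⟩
  have hs : ∀ z, dist (d + r * x) (d + r * z) = r * dist x z := fun z => by
    rw [Real.dist_eq, Real.dist_eq, add_sub_add_left_eq_sub, ← mul_sub, abs_mul, abs_of_pos hr]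
  apply le_antisymm
  · rw [← div_le_iff₀' hr]
    refine (Metric.le_infDist KK_nonempty).2 fun z hz => ?_
    rw [div_le_iff₀' hr, ← hs]
    exact Metric.infDist_le_dist_of_mem (KK_right hr h2 hd hz)
  · refine (Metric.le_infDist KK_nonempty).2 fun y hy => ?_
    obtain ⟨z, hz, rfl | rfl⟩ := KK_cases hr h2 hd hy
    · refine (mul_le_mul_of_nonneg_left (Metric.infDist_le_dist_of_mem hMK) hr.le).trans ?_
      have hz0 := (KK_sub hr h2 hd hM hz).2
      have hM0 : 0 ≤ M := hx.1.trans hx.2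
      rw [Real.dist_eq, Real.dist_eq, abs_of_nonneg (by linarith [hx.1])]
      refine le_trans ?_ (le_abs_self _)
      nlinarith [mul_le_mul_of_nonneg_left hz0 hr.le]
    · rw [hs]
      exact mul_le_mul_of_nonneg_left (Metric.infDist_le_dist_of_mem hz) hr.le

lemma digits_eq (F : (ℕ → Bool) → ℝ) (h01 : ∀ a, F a ∈ Set.Icc (0 : ℝ) 1)
    (hF : ∀ a, F a = ((if a 0 then 2 else 0) + F (fun n => a (n + 1))) / 3) (a : ℕ → Bool) :
    F a = Real.ofDigits (fun i => cond (a i) (2 : Fin 3) 0) := by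
  set G : (ℕ → Bool) → ℝ := fun a => Real.ofDigits (fun i => cond (a i) (2 : Fin 3) 0) with hGd
  have hG : ∀ a, G a = ((if a 0 then 2 else 0) + G (fun n => a (n + 1))) / 3 := by
    intro a
    simp only [hGd]
    rw [Real.ofDigits_eq_sum_add_ofDigits _ 1]
    cases h : a 0 <;> simp [Real.ofDigitsTerm, h, add_comm] <;> ring
  have key : ∀ n : ℕ, ∀ a, |F a - G a| ≤ (1 / 3 : ℝ) ^ n := by
    intro n
    induction n with
    | zero =>
      intro a
      have h1 := h01 a
      have h2 := Real.ofDigits_nonneg (fun i => cond (a i) (2 : Fin 3) 0)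
      have h3 := Real.ofDigits_le_one (fun i => cond (a i) (2 : Fin 3) 0)
      simp only [hGd, pow_zero, abs_le]
      constructor <;> linarith [h1.1, h1.2]
    | succ n ih =>
      intro a
      have := ih (fun n => a (n + 1))
      rw [abs_le] at this ⊢
      rw [hF a, hG a, pow_succ]
      constructor <;> linarith [this.1, this.2]
  have hl : Filter.Tendsto (fun n : ℕ => (1 / 3 : ℝ) ^ n) Filter.atTop (nhds 0) :=
    tendsto_pow_atTop_nhds_zero_of_lt_one (by norm_num) (by norm_num)
  have := ge_of_tendsto' hl (fun n => key n a)
  exact sub_eq_zero.1 (abs_eq_zero.1 (le_antisymm this (abs_nonneg _)))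

lemma rpow_holder {α a b : ℝ} (ha : 0 < α) (h1 : α ≤ 1) (hx : 0 ≤ a) (hy : 0 ≤ b) :
    |a ^ α - b ^ α| ≤ |a - b| ^ α := by
  wlog h : b ≤ a generalizing a b
  · rw [abs_sub_comm, abs_sub_comm a b]
    exact this hy hx (le_of_not_ge h)
  rw [abs_of_nonneg (sub_nonneg.2 (Real.rpow_le_rpow hy h ha.le)), abs_of_nonneg (sub_nonneg.2 h)]
  have := Real.rpow_add_le_add_rpow (sub_nonneg.2 h) hy ha.le h1
  rw [sub_add_cancel] at this
  linarith

end aux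



/-- For every `0 < α < log(3/2)/log 2`, with `M_α = 1/(3^{1/(1+α)} - 2)`, there is a
strictly increasing `C¹` function `f : [0, M_α] → [0, 1]` whose derivative is
`α`-Hölder continuous, with `f 0 = 0`, `f M_α = 1`, whose critical set
`A = {x ∈ [0, M_α] : f' x = 0}` is Lebesgue-null and satisfies `f(A) = C`,
the Cantor ternary set. -/
theorem exists_C1_alpha_holder_deriv_image_cantorSet (α : ℝ) (hα0 : 0 < α)
    (hα : α < Real.log (3 / 2) / Real.log 2) :
    ∃ (M : ℝ), M = 1 / ((3 : ℝ) ^ (1 / (1 + α)) - 2) ∧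
    ∃ f f' : ℝ → ℝ,
      StrictMonoOn f (Set.Icc 0 M) ∧
      Set.MapsTo f (Set.Icc 0 M) (Set.Icc 0 1) ∧
      (∀ x ∈ Set.Icc 0 M, HasDerivWithinAt f (f' x) (Set.Icc 0 M) x) ∧
      ContinuousOn f' (Set.Icc 0 M) ∧
      (∃ K : ℝ, ∀ x ∈ Set.Icc 0 M, ∀ y ∈ Set.Icc 0 M,
        |f' x - f' y| ≤ K * |x - y| ^ α) ∧
      f 0 = 0 ∧ f M = 1 ∧
      volume {x ∈ Set.Icc 0 M | f' x = 0} = 0 ∧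
      f '' {x ∈ Set.Icc 0 M | f' x = 0} = cantorSet := by
  refine ⟨_, rfl, ?_⟩
  have hl2 : 0 < Real.log 2 := Real.log_pos (by norm_num)
  have hα1 : α < 1 := hα.trans_le (by
    rw [div_le_one hl2]; exact Real.log_le_log (by norm_num) (by norm_num))
  have hb : (2 : ℝ) < 3 ^ (1 / (1 + α)) := by
    rw [lt_div_iff₀ hl2, Real.log_div (by norm_num) (by norm_num)] at hα
    rw [Real.lt_rpow_iff_log_lt (by norm_num) (by norm_num), div_mul_eq_mul_div, one_mul,
      lt_div_iff₀ (by linarith)]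
    linarith
  have hb3 : ((3 : ℝ) ^ (1 / (1 + α))) ^ (1 + α) = 3 := by
    rw [← Real.rpow_mul (by norm_num), one_div_mul_cancel (by linarith), Real.rpow_one]
  generalize (3 : ℝ) ^ (1 / (1 + α)) = b at hb hb3
  set M : ℝ := 1 / (b - 2) with hMdef
  have hM0 : 0 < M := by rw [hMdef]; apply one_div_pos.2; linarith
  obtain ⟨r, hrb⟩ : ∃ r, r = b⁻¹ := ⟨_, rfl⟩
  have hr : 0 < r := by rw [hrb]; apply inv_pos.2; linarith
  have h2 : 2 * r < 1 := by
    rw [hrb, ← div_eq_mul_inv, div_lt_one (by linarith)]; exact hb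
  have hr3 : r * r ^ α = 1 / 3 := by
    have : r * r ^ α = r ^ (1 + α) := by rw [Real.rpow_add hr, Real.rpow_one]
    rw [this, hrb, Real.inv_rpow (by linarith), hb3]; norm_num
  clear_value M
  obtain ⟨d, hd⟩ : ∃ d, d = (1 - r) * M := ⟨_, rfl⟩
  have hd0 : 0 < d := by rw [hd]; apply mul_pos <;> linarith
  set g : ℝ → ℝ := fun x => Metric.infDist x (KK r d) ^ α with hg
  have hgc : Continuous g :=
    (Metric.continuous_infDist_pt _).rpow_const (fun x => Or.inr hα0.le)
  have hg0 : ∀ x, 0 ≤ g x := fun x => Real.rpow_nonneg Metric.infDist_nonneg _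
  have hgz : ∀ x, g x = 0 ↔ x ∈ KK r d := fun x => by
    rw [hg, (KK_compact hr h2 hd0).isClosed.mem_iff_infDist_zero KK_nonempty]
    exact Real.rpow_eq_zero Metric.infDist_nonneg hα0.ne'
  have hgi : ∀ a b, IntervalIntegrable g volume a b := fun a b => hgc.intervalIntegrable a b
  set F : ℝ → ℝ := fun x => ∫ t in (0 : ℝ)..x, g t with hF
  have hFsub : ∀ x y, F y - F x = ∫ t in x..y, g t := fun x y =>
    intervalIntegral.integral_interval_sub_left (hgi _ _) (hgi _ _)
  have hFmono : StrictMono F := by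
    intro x y hxy
    rw [← sub_pos, hFsub]
    refine intervalIntegral.integral_pos hxy hgc.continuousOn (fun t _ => hg0 t) ?_
    by_contra! hcon
    have : Set.Icc x y ⊆ KK r d := fun t ht => (hgz t).1 (le_antisymm (hcon t ht) (hg0 t))
    have h3 := measure_mono_null this (KK_null hr h2 hd0)
    rw [Real.volume_Icc, ENNReal.ofReal_eq_zero] at h3
    linarith
  have hF0 : F 0 = 0 := by simp [hF]
  have hder : ∀ x, HasDerivAt F (g x) x := fun x => hgc.integral_hasStrictDerivAt 0 x |>.hasDerivAt
  have hgl : ∀ x ∈ Set.Icc 0 M, g (r * x) = r ^ α * g x := fun x hx => by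
    simp only [hg]
    rw [infDist_left hr h2 hd0 hd hx, Real.mul_rpow hr.le Metric.infDist_nonneg]
  have hgr : ∀ x ∈ Set.Icc 0 M, g (d + r * x) = r ^ α * g x := fun x hx => by
    simp only [hg]
    rw [infDist_right hr h2 hd0 hd hx, Real.mul_rpow hr.le Metric.infDist_nonneg]
  have hscale : ∀ c, (∀ x ∈ Set.Icc 0 M, g (c + r * x) = r ^ α * g x) →
      ∀ x ∈ Set.Icc 0 M, F (c + r * x) = F c + F x / 3 := by
    intro c hc x hx
    have h3 : F (c + r * x) - F c = r * ∫ t in (0 : ℝ)..x, g (c + r * t) := by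
      rw [hFsub]
      have := intervalIntegral.mul_integral_comp_add_mul (f := g) (a := 0) (b := x) r c
      rw [this]; simp
    have h4 : ∫ t in (0 : ℝ)..x, g (c + r * t) = ∫ t in (0 : ℝ)..x, r ^ α * g t := by
      apply intervalIntegral.integral_congr
      intro t ht
      rw [Set.uIcc_of_le hx.1] at ht
      exact hc t ⟨ht.1, ht.2.trans hx.2⟩
    rw [h4, intervalIntegral.integral_const_mul, ← mul_assoc, hr3] at h3
    have : F x = ∫ t in (0 : ℝ)..x, g t := rfl
    rw [← this] at h3
    linarith
  have hFl : ∀ x ∈ Set.Icc 0 M, F (r * x) = F x / 3 := fun x hx => by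
    have := hscale 0 (fun x hx => by rw [zero_add]; exact hgl x hx) x hx
    rwa [zero_add, hF0, zero_add] at this
  have hFr := hscale d hgr
  have hFM : 0 < F M := by rw [← hF0]; exact hFmono hM0
  have hFd : F d = 2 / 3 * F M := by
    have := hFr M ⟨hM0.le, le_rfl⟩
    rw [show d + r * M = M by rw [hd]; ring] at this
    linarith
  have hset : {x ∈ Set.Icc 0 M | g x / F M = 0} = KK r d := by
    ext x
    simp only [Set.mem_ofPred_eq, div_eq_zero_iff, hFM.ne', or_false, hgz]
    exact ⟨fun h => h.2, fun h => ⟨KK_sub hr h2 hd0 hd h, h⟩⟩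
  have hmaps : Set.MapsTo (fun x => F x / F M) (Set.Icc 0 M) (Set.Icc 0 1) := by
    intro x hx
    have h3 := hFmono.monotone hx.1
    have h4 := hFmono.monotone hx.2
    rw [hF0] at h3
    exact ⟨div_nonneg h3 hFM.le, (div_le_one hFM).2 h4⟩
  refine ⟨fun x => F x / F M, fun x => g x / F M, ?_, hmaps, ?_, ?_, ?_, ?_, ?_, ?_, ?_⟩
  · intro x _ y _ hxy
    exact div_lt_div_of_pos_right (hFmono hxy) hFM
  · intro x _
    exact ((hder x).div_const _).hasDerivWithinAt
  · exact (hgc.div_const _).continuousOn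
  · refine ⟨1 / F M, fun x _ y _ => ?_⟩
    rw [← sub_div, abs_div, abs_of_pos hFM, div_mul_eq_mul_div, one_mul]
    refine div_le_div_of_nonneg_right ?_ hFM.le
    refine (rpow_holder hα0 hα1.le Metric.infDist_nonneg Metric.infDist_nonneg).trans ?_
    refine Real.rpow_le_rpow (abs_nonneg _) ?_ hα0.le
    have := (Metric.lipschitz_infDist_pt (KK r d)).dist_le_mul x y
    simpa [Real.dist_eq] using this
  · simp [hF0]
  · exact div_self hFM.ne'
  · rw [hset]; exact KK_null hr h2 hd0
  · rw [hset]
    have key := digits_eq (fun a => F (kmap r d a) / F M)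
      (fun a => hmaps (KK_sub hr h2 hd0 hd ⟨a, rfl⟩)) (fun a => by
        have hm := KK_sub hr h2 hd0 hd ⟨fun n => a (n + 1), rfl⟩
        rw [kmap_shift hr h2 hd0 a]
        cases a 0
        · simp only [Bool.false_eq_true, if_false, zero_add]
          rw [hFl _ hm]; ring
        · simp only [if_true]
          rw [hFr _ hm, hFd]; field_simp)
    ext y
    constructor
    · rintro ⟨_, ⟨a, rfl⟩, rfl⟩
      have := key a
      simp only at this ⊢
      rw [this]
      exact ofDigits_bool_to_fin_three_mem_cantorSet a
    · intro hy
      refine ⟨_, ⟨cantorSetEquivNatToBool ⟨y, hy⟩, rfl⟩, ?_⟩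
      have := key (cantorSetEquivNatToBool ⟨y, hy⟩)
      simp only at this ⊢
      rw [this]
      exact congrArg Subtype.val (cantorSetEquivNatToBool.symm_apply_apply ⟨y, hy⟩)
end
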